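/- There exists n₀ ∈ ℕ such that for all integers n ≥ n₀ divisible by 3 the following holds. Let H be a 3-uniform hypergraph on n vertices with no isolated vertex. If deg(u) + deg(v) > (2/3)n² − (8/3)n + 2 for every pair of adjacent vertices u, v of H, then H contains a perfect matching. -/

import Mathlib

/-!
Write `n = 3 (m + 1)`. In integers the hypothesis says `deg u + deg v ≥ 6m² + 4m + 1` for adjacent
`u, v`. Call a vertex low if its degree is at most `3m² + 2m`, half of the bound, and let `L` be the
set of low vertices. No two low vertices are adjacent.

*Low vertices can be covered by a matching* (`Ore.covers`). A low vertex has a neighbour, which is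
high and whose link contains no pair inside `L`; so the degree-sum condition gives `|L| ≤ m + 1` and
shows that the links of the low vertices, as graphs on the complement of `L`, are nearly complete
(`Ore.low_bounds`). If `|L| ≤ m`, a rainbow matching theorem for graphs with many edges, proved by
shifting (`rainbow`), chooses disjoint pairs from the links. If `|L| = m + 1`, the same theorem
covers all but one vertex of `L`, and counting produces four of the matching edges which, together
with the three remaining vertices, can be regrouped into five edges (`covers_of_lab`).

*Saturation* (`Ore.exists_triple`, `Ore.addTriple`, `Ore.step`). A largest matching covering `L`
leaves a triple of high vertices that is not an edge. Adding this triple to the hypergraph preserves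
all hypotheses, so by induction on the number of non-edges the larger hypergraph has a perfect
matching. Hence the original one has either a perfect matching or a near-perfect matching whose
three uncovered vertices are high.

*A near-perfect matching with high uncovered vertices forces a perfect matching* (`Setup.false`).
For two matching edges `e, f`, the edges `v x y` with `v` uncovered, `x ∈ e`, `y ∈ f` form a `0/1`
cube of side three. An all-ones diagonal would give a perfect matching, so the cube has at most `18`
ones, and if it has `18`, its zeros form a layer (`tight_pattern`). The degrees of the uncovered
vertices show that almost all pairs are extremal. Comparing with other near-perfect matchings, the
layer of zeros belongs, for almost all pairs, to one vertex of `e` or one vertex of `f`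
(`Setup.orient_most`); this orients the pair (`Orient`). Choose five matching edges with all pairs
oriented and all further comparisons below generic (`exists_five`), and arrange them along a
Hamiltonian path `a → b → c → d → e` of the tournament (Rédei). Since the vertices of `c` and of `e`
can be made uncovered by an exchange, their links are almost the link of the uncovered vertices
(`Setup.diff_le`). For suitable `x ∈ c`, `y ∈ d` and any `z ∈ e`, the orientation `c → d` then says
that the link of `z` contains `x y`, whereas `d → e` says that the link of `x` does not contain
`y z`: a contradiction.
-/

/-! ### Cubes of side three without an all-ones diagonal -/

namespace OreMatching

/-- Three pairwise distinct elements. -/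
def D3 {α : Type*} (x y z : α) : Prop := x ≠ y ∧ y ≠ z ∧ x ≠ z

lemma D3.sum {x y z : Fin 3} (h : D3 x y z) (F : Fin 3 → ℕ) :
    ∑ i, F i = F x + F y + F z := by
  obtain ⟨h1, h2, h3⟩ := h
  rw [Fin.sum_univ_three]
  fin_cases x <;> fin_cases y <;> fin_cases z <;> simp_all <;> omega

lemma D3.cover {x y z : Fin 3} (h : D3 x y z) (k : Fin 3) : k = x ∨ k = y ∨ k = z := by
  unfold D3 at h; omega

lemma exists_D3 (x : Fin 3) : ∃ y z, D3 x y z := by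
  unfold D3; revert x; decide

lemma D3.add {x y z : Fin 3} (h : D3 x y z) (s : Fin 3) : D3 (x + s) (y + s) (z + s) := by
  unfold D3 at *; simpa using h

/-- The nine translates of a diagonal in the last two coordinates partition the cube. -/
lemma D3.diag {i j k a a' a'' b b' b'' : Fin 3} (hi : D3 i j k)
    (f : Fin 3 → Fin 3 → Fin 3 → ℕ) :
    ∑ s, ∑ t, (f i (a + s) (b + t) + f j (a' + s) (b' + t) + f k (a'' + s) (b'' + t)) =
      ∑ i, ∑ a, ∑ b, f i a b := by
  have key : ∀ i a b : Fin 3, ∑ s, ∑ t, f i (a + s) (b + t) = ∑ s, ∑ t, f i s t := by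
    intro i a b
    rw [← Equiv.sum_comp (Equiv.addLeft a) (fun s => ∑ t, f i s t)]
    refine Finset.sum_congr rfl fun s _ => ?_
    rw [← Equiv.sum_comp (Equiv.addLeft b) (fun t => f i _ t)]
    rfl
  rw [hi.sum (fun i => ∑ a, ∑ b, f i a b)]
  simp only [Finset.sum_add_distrib, key]

/-- The condition that no diagonal of the cube `f` consists of ones only. -/
def DiagLe (f : Fin 3 → Fin 3 → Fin 3 → ℕ) : Prop :=
  ∀ i j k a a' a'' b b' b'', D3 i j k → D3 a a' a'' → D3 b b' b'' →
    f i a b + f j a' b' + f k a'' b'' ≤ 2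

lemma DiagLe.total_le {f : Fin 3 → Fin 3 → Fin 3 → ℕ} (h : DiagLe f) :
    ∑ i, ∑ a, ∑ b, f i a b ≤ 18 := by
  have d : D3 (0 : Fin 3) 1 2 := by unfold D3; decide
  rw [← D3.diag (a := 0) (a' := 1) (a'' := 2) (b := 0) (b' := 1) (b'' := 2) d f]
  calc _ ≤ ∑ s : Fin 3, ∑ t : Fin 3, 2 := by
        refine Finset.sum_le_sum fun s _ => Finset.sum_le_sum fun t _ => ?_
        exact h _ _ _ _ _ _ _ _ _ d (d.add s) (d.add t)
    _ = 18 := by simp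

lemma DiagLe.diag_eq {f : Fin 3 → Fin 3 → Fin 3 → ℕ} (h : DiagLe f)
    (ht : ∑ i, ∑ a, ∑ b, f i a b = 18) {i j k a a' a'' b b' b'' : Fin 3}
    (hi : D3 i j k) (ha : D3 a a' a'') (hb : D3 b b' b'') :
    f i a b + f j a' b' + f k a'' b'' = 2 := by
  rw [← D3.diag (a := a) (a' := a') (a'' := a'') (b := b) (b' := b') (b'' := b'') hi f] at ht
  have hle : ∀ s t, f i (a + s) (b + t) + f j (a' + s) (b' + t) + f k (a'' + s) (b'' + t) ≤ 2 :=
    fun s t => h _ _ _ _ _ _ _ _ _ hi (ha.add s) (hb.add t)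
  simp only [Fin.sum_univ_three] at ht
  have := hle 0 0; have := hle 0 1; have := hle 0 2
  have := hle 1 0; have := hle 1 1; have := hle 1 2
  have := hle 2 0; have := hle 2 1; have := hle 2 2
  simp only [add_zero] at *
  omega

lemma exists_third {a a' : Fin 3} (h : a ≠ a') : ∃ a'', D3 a a' a'' := by
  unfold D3; revert a a'; decide

/-- If all diagonals of a `0/1` cube have sum `2` and some line in the middle coordinate direction
has a `0` at `a` and a `1` elsewhere, then the zeros of the cube form the layer at `a`. -/
lemma layer {f : Fin 3 → Fin 3 → Fin 3 → ℕ} (h1 : ∀ i a b, f i a b ≤ 1)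
    (hd : ∀ {i j k a a' a'' b b' b'' : Fin 3}, D3 i j k → D3 a a' a'' → D3 b b' b'' →
      f i a b + f j a' b' + f k a'' b'' = 2)
    {a a' : Fin 3} {i b : Fin 3} (h0 : f i a b = 0) (h0' : f i a' b = 1) :
    ∀ i x b, f i x b = if x = a then 0 else 1 := by
  have hne : a ≠ a' := by rintro rfl; omega
  obtain ⟨a'', ha⟩ := exists_third hne
  have step : ∀ {i b j b'}, f i a b = 0 → f i a' b = 1 → j ≠ i → b' ≠ b →
      f j a b' = 0 ∧ f j a' b' = 1 := by
    intro i b j b' p q hj hb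
    obtain ⟨k, hk⟩ := exists_third hj
    obtain ⟨b'', hb''⟩ := exists_third hb
    have e1 := hd hk ha hb''
    have e2 := hd hk (a := a') (a' := a) (a'' := a'')
      ⟨ha.1.symm, ha.2.2, ha.2.1⟩ hb''
    have := h1 j a b'; have := h1 j a' b'
    omega
  have all0 : ∀ j b', f j a b' = 0 := by
    intro j b'
    have key : ∀ i j : Fin 3, ∃ j1 j2, j1 ≠ i ∧ j2 ≠ j1 ∧ j ≠ j2 := by decide
    obtain ⟨j1, j2, n1, n3, n5⟩ := key i j
    obtain ⟨b1, b2, n2, n4, n6⟩ := key b b'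
    obtain ⟨p, q⟩ := step h0 h0' n1 n2
    obtain ⟨p, q⟩ := step p q n3 n4
    exact (step p q n5 n6).1
  intro i x b
  split_ifs with hx
  · rw [hx]; exact all0 i b
  · obtain ⟨y, hy⟩ := exists_third hx
    obtain ⟨j, k, hi⟩ := exists_D3 i
    obtain ⟨b', b'', hb⟩ := exists_D3 b
    have e := hd hi hy hb
    have := all0 j b'
    have := h1 i x b; have := h1 k y b''
    omega

/-- If a `0/1` cube of side three without an all-ones diagonal has exactly `18` ones, the maximum
by `DiagLe.total_le`, then its zeros form one of the nine axis-parallel layers. -/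
lemma tight_pattern {f : Fin 3 → Fin 3 → Fin 3 → ℕ} (h1 : ∀ i a b, f i a b ≤ 1)
    (h : DiagLe f) (ht : ∑ i, ∑ a, ∑ b, f i a b = 18) :
    (∃ i0, ∀ i a b, f i a b = if i = i0 then 0 else 1) ∨
    (∃ a0, ∀ i a b, f i a b = if a = a0 then 0 else 1) ∨
    (∃ b0, ∀ i a b, f i a b = if b = b0 then 0 else 1) := by
  have hd : ∀ {i j k a a' a'' b b' b'' : Fin 3}, D3 i j k → D3 a a' a'' → D3 b b' b'' →
      f i a b + f j a' b' + f k a'' b'' = 2 := fun p q r => h.diag_eq ht p q r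
  by_cases c1 : ∃ i i' a b, f i a b = 0 ∧ f i' a b = 1
  · obtain ⟨i, i', a, b, p, q⟩ := c1
    left
    refine ⟨i, ?_⟩
    have := layer (f := fun a i b => f i a b) (fun _ _ _ => h1 _ _ _)
      (fun p q r => hd q p r) (a := i) (a' := i') (i := a) (b := b) p q
    intro i a b; exact this a i b
  by_cases c2 : ∃ i a a' b, f i a b = 0 ∧ f i a' b = 1
  · obtain ⟨i, a, a', b, p, q⟩ := c2
    exact Or.inr (Or.inl ⟨a, layer h1 hd p q⟩)
  by_cases c3 : ∃ i a b b', f i a b = 0 ∧ f i a b' = 1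
  · obtain ⟨i, a, b, b', p, q⟩ := c3
    right; right
    refine ⟨b, ?_⟩
    have := layer (f := fun i b a => f i a b) (fun _ _ _ => h1 _ _ _)
      (fun p q r => hd p r q) (a := b) (a' := b') (i := i) (b := a) p q
    intro i a b; exact this i b a
  exfalso
  push Not at c1 c2 c3
  have c : ∀ i a b, f i a b = f 0 0 0 := by
    intro i a b
    have e1 : f i a b = f 0 a b := by
      have := c1 i 0 a b; have := c1 0 i a b; have := h1 i a b; have := h1 0 a b; omega
    have e2 : f 0 a b = f 0 0 b := by
      have := c2 0 a 0 b; have := c2 0 0 a b; have := h1 0 a b; have := h1 0 0 b; omega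
    have e3 : f 0 0 b = f 0 0 0 := by
      have := c3 0 0 b 0; have := c3 0 0 0 b; have := h1 0 0 b; have := h1 0 0 0; omega
    omega
  simp only [c] at ht
  simp at ht
  omega

end OreMatching

/-! ### Degrees, near-perfect matchings and exchanges -/

namespace OreMatching
set_option linter.unusedSectionVars false
section Basic
variable {V : Type*} [Fintype V] [DecidableEq V]

/-- The degree of a vertex: the number of edges containing it. -/
def deg (E : Finset (Finset V)) (v : V) : ℕ := (E.filter (fun e => v ∈ e)).card

/-- A perfect matching of `E`. -/
def HasPM (E : Finset (Finset V)) : Prop :=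
  ∃ M ⊆ E, (∀ e ∈ M, ∀ f ∈ M, e ≠ f → Disjoint e f) ∧ ∀ v, ∃ e ∈ M, v ∈ e

/-- The indicator (in `ℕ`) of `{x, y, z}` being an edge. -/
def tri (E : Finset (Finset V)) (x y z : V) : ℕ := if ({x, y, z} : Finset V) ∈ E then 1 else 0

variable {E : Finset (Finset V)}

lemma tri_le (x y z : V) : tri E x y z ≤ 1 := by unfold tri; split_ifs <;> omega

lemma tri_eq_one {x y z : V} : tri E x y z = 1 ↔ ({x, y, z} : Finset V) ∈ E := by
  unfold tri; split_ifs <;> simp_all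

lemma tri_swap (x y z : V) : tri E x y z = tri E y x z := by
  unfold tri; rw [Finset.insert_comm]

lemma tri_swap' (x y z : V) : tri E x y z = tri E x z y := by
  unfold tri; rw [Finset.pair_comm]

lemma tri_self (hE : ∀ e ∈ E, e.card = 3) (x y : V) : tri E x x y = 0 := by
  unfold tri
  rw [if_neg]
  intro h
  have := hE _ h
  have h2 : ({x, x, y} : Finset V).card ≤ 2 := by
    rw [Finset.insert_eq_of_mem (by simp)]; exact Finset.card_le_two
  omega

lemma tri_self' (hE : ∀ e ∈ E, e.card = 3) (x y : V) : tri E x y y = 0 := by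
  rw [tri_swap, tri_swap', tri_self hE]

lemma tri_self'' (hE : ∀ e ∈ E, e.card = 3) (x y : V) : tri E x y x = 0 := by
  rw [tri_swap', tri_self hE]

/-- The ordered pairs completing `v` to an edge count the degree twice. -/
lemma two_deg (hE : ∀ e ∈ E, e.card = 3) (v : V) :
    2 * deg E v = ∑ x, ∑ y, tri E v x y := by
  classical
  rw [← Finset.sum_product' (f := fun x y => tri E v x y)]
  simp only [tri]
  rw [← Finset.card_filter]
  rw [Finset.card_eq_sum_card_fiberwise (f := fun q : V × V => ({v, q.1, q.2} : Finset V))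
    (t := E.filter (fun e => v ∈ e))]
  · rw [deg, mul_comm, ← smul_eq_mul, ← Finset.sum_const]
    refine Finset.sum_congr rfl fun e he => ?_
    rw [Finset.mem_filter] at he
    obtain ⟨he, hv⟩ := he
    have h3 := hE e he
    have h2 : (e.erase v).card = 2 := by rw [Finset.card_erase_of_mem hv, h3]
    obtain ⟨a, b, hab, hE2⟩ := Finset.card_eq_two.mp h2
    have hee : e = {v, a, b} := by rw [← Finset.insert_erase hv, hE2]
    have hva : v ≠ a := by
      rintro rfl
      have : v ∈ e.erase v := by rw [hE2]; simp
      simp at this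
    have hvb : v ≠ b := by
      rintro rfl
      have : v ∈ e.erase v := by rw [hE2]; simp
      simp at this
    have : (Finset.filter (fun q : V × V => ({v, q.1, q.2} : Finset V) = e)
        (Finset.filter (fun q : V × V => ({v, q.1, q.2} : Finset V) ∈ E)
          (Finset.univ ×ˢ Finset.univ))) = {(a, b), (b, a)} := by
      ext ⟨x, y⟩
      simp only [Finset.mem_filter, Finset.mem_product, Finset.mem_univ, true_and,
        Finset.mem_insert, Finset.mem_singleton, Prod.mk.injEq]
      constructor
      · rintro ⟨-, h⟩
        rw [hee] at h
        have hx : x ∈ ({v, a, b} : Finset V) := by rw [← h]; simp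
        have hy : y ∈ ({v, a, b} : Finset V) := by rw [← h]; simp
        have ha : a ∈ ({v, x, y} : Finset V) := by rw [h]; simp
        have hb : b ∈ ({v, x, y} : Finset V) := by rw [h]; simp
        simp only [Finset.mem_insert, Finset.mem_singleton] at hx hy ha hb
        grind
      · rintro (⟨rfl, rfl⟩ | ⟨rfl, rfl⟩)
        · exact ⟨hee ▸ he, hee.symm⟩
        · rw [Finset.pair_comm]; exact ⟨hee ▸ he, hee.symm⟩
    rw [this, Finset.card_pair]
    simp [hab]
  · intro q hq
    simp only [Finset.coe_filter, Finset.mem_product, Finset.mem_univ, true_and,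
      Set.mem_ofPred_eq] at hq ⊢
    exact ⟨hq, by simp⟩

end Basic

section Near
variable {V : Type*} [Fintype V] [DecidableEq V] {I : Type*} [Fintype I] [DecidableEq I]
variable {E : Finset (Finset V)}

/-- A labelling of the vertices by a matching with one triple left over: the rows `some i` are the
matching edges, the row `none` is the uncovered triple. Only surjectivity is recorded; it gives
bijectivity as soon as `V` has `3 (|I| + 1)` elements. -/
structure NP (E : Finset (Finset V)) (φ : Option I → Fin 3 → V) : Prop where
  surj : ∀ v, ∃ j k, φ j k = v
  edge : ∀ i : I, ({φ (some i) 0, φ (some i) 1, φ (some i) 2} : Finset V) ∈ E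

variable {φ : Option I → Fin 3 → V}

lemma NP.bij (hc : Fintype.card V = 3 * (Fintype.card I + 1)) (h : NP E φ) :
    Function.Bijective (fun q : Option I × Fin 3 => φ q.1 q.2) := by
  rw [Fintype.bijective_iff_surjective_and_card]
  refine ⟨fun v => ?_, ?_⟩
  · obtain ⟨j, k, h⟩ := h.surj v
    exact ⟨(j, k), h⟩
  · simp [hc]; ring

lemma NP.inj (hc : Fintype.card V = 3 * (Fintype.card I + 1)) (h : NP E φ) {j j' k k'}
    (e : φ j k = φ j' k') : j = j' ∧ k = k' := by
  have := (h.bij hc).1 (a₁ := (j, k)) (a₂ := (j', k')) e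
  simpa using this

lemma NP.sum (hc : Fintype.card V = 3 * (Fintype.card I + 1)) (h : NP E φ) (F : V → ℕ) :
    ∑ v, F v = ∑ k, F (φ none k) + ∑ i, ∑ k, F (φ (some i) k) := by
  rw [← (Equiv.ofBijective _ (h.bij hc)).sum_comp F, Fintype.sum_prod_type, Fintype.sum_option]
  rfl

lemma NP.pm (hc : Fintype.card V = 3 * (Fintype.card I + 1)) (h : NP E φ)
    (h0 : ({φ none 0, φ none 1, φ none 2} : Finset V) ∈ E) : HasPM E := by
  have hm : ∀ j v, v ∈ ({φ j 0, φ j 1, φ j 2} : Finset V) ↔ ∃ k, φ j k = v := by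
    intro j v
    simp only [Finset.mem_insert, Finset.mem_singleton, Fin.exists_fin_succ]
    simp [eq_comm]
  refine ⟨Finset.univ.image (fun j : Option I => ({φ j 0, φ j 1, φ j 2} : Finset V)), ?_, ?_, ?_⟩
  · intro e he
    simp only [Finset.mem_image, Finset.mem_univ, true_and] at he
    obtain ⟨j, rfl⟩ := he
    cases j with
    | none => exact h0
    | some i => exact h.edge i
  · intro e he f hf hef
    simp only [Finset.mem_image, Finset.mem_univ, true_and] at he hf
    obtain ⟨j, rfl⟩ := he
    obtain ⟨j', rfl⟩ := hf
    rw [Finset.disjoint_left]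
    intro v hv hv'
    rw [hm] at hv hv'
    obtain ⟨k, rfl⟩ := hv
    obtain ⟨k', hk⟩ := hv'
    have := (h.inj hc hk).1
    subst this
    exact hef rfl
  · intro v
    obtain ⟨j, k, hv⟩ := h.surj v
    exact ⟨_, Finset.mem_image_of_mem _ (Finset.mem_univ j), (hm j v).2 ⟨k, hv⟩⟩

/-- Replace the uncovered triple and one matching edge. -/
def upd1 (φ : Option I → Fin 3 → V) (e : I) (A B : Fin 3 → V) : Option I → Fin 3 → V :=
  fun j => if j = none then A else if j = some e then B else φ j

/-- Replace the uncovered triple and two matching edges. -/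
def upd2 (φ : Option I → Fin 3 → V) (e f : I) (A B C : Fin 3 → V) : Option I → Fin 3 → V :=
  fun j => if j = none then A else if j = some e then B else if j = some f then C else φ j

@[simp] lemma upd1_none (e : I) (A B : Fin 3 → V) : upd1 φ e A B none = A := by simp [upd1]
@[simp] lemma upd1_e (e : I) (A B : Fin 3 → V) : upd1 φ e A B (some e) = B := by simp [upd1]
lemma upd1_ne {e i : I} (A B : Fin 3 → V) (h : i ≠ e) : upd1 φ e A B (some i) = φ (some i) := by
  simp [upd1, h]
@[simp] lemma upd2_none (e f : I) (A B C : Fin 3 → V) : upd2 φ e f A B C none = A := by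
  simp [upd2]
@[simp] lemma upd2_e (e f : I) (A B C : Fin 3 → V) : upd2 φ e f A B C (some e) = B := by
  simp [upd2]
lemma upd2_f {e f : I} (A B C : Fin 3 → V) (h : e ≠ f) : upd2 φ e f A B C (some f) = C := by
  simp [upd2, h.symm]
lemma upd2_ne {e f i : I} (A B C : Fin 3 → V) (h : i ≠ e) (hif : i ≠ f) :
    upd2 φ e f A B C (some i) = φ (some i) := by
  simp [upd2, h, hif]

/-- Exchange inside one matching edge: `v_j v_k x_a` replaces the edge and `v_i x_b x_c` becomes
the uncovered triple. -/
lemma NP.swap1 (h : NP E φ) {e : I} {i j k a b c : Fin 3} (hi : D3 i j k) (ha : D3 a b c)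
    (h1 : tri E (φ none j) (φ none k) (φ (some e) a) = 1) :
    NP E (upd1 φ e ![φ none i, φ (some e) b, φ (some e) c]
      ![φ none j, φ none k, φ (some e) a]) := by
  constructor
  · intro v
    obtain ⟨r, s, rfl⟩ := h.surj v
    rcases r with _ | r
    · rcases hi.cover s with rfl | rfl | rfl
      · exact ⟨none, 0, by simp⟩
      · exact ⟨some e, 0, by simp⟩
      · exact ⟨some e, 1, by simp⟩
    · by_cases hr : r = e
      · subst hr
        rcases ha.cover s with rfl | rfl | rfl
        · exact ⟨some r, 2, by simp⟩
        · exact ⟨none, 1, by simp⟩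
        · exact ⟨none, 2, by simp⟩
      · exact ⟨some r, s, by rw [upd1_ne _ _ hr]⟩
  · intro r
    by_cases hr : r = e
    · subst hr
      simpa [tri_eq_one] using h1
    · rw [upd1_ne _ _ hr]; exact h.edge r

/-- Exchange inside two matching edges: two edges `v x y` replace them. -/
lemma NP.swap2 (h : NP E φ) {e f : I} (hef : e ≠ f) {i j k a a' a'' b b' b'' : Fin 3}
    (hi : D3 i j k) (ha : D3 a a' a'') (hb : D3 b b' b'')
    (h1 : tri E (φ none j) (φ (some e) a') (φ (some f) b') = 1)
    (h2 : tri E (φ none k) (φ (some e) a'') (φ (some f) b'') = 1) :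
    NP E (upd2 φ e f ![φ none i, φ (some e) a, φ (some f) b]
      ![φ none j, φ (some e) a', φ (some f) b']
      ![φ none k, φ (some e) a'', φ (some f) b'']) := by
  constructor
  · intro v
    obtain ⟨r, s, rfl⟩ := h.surj v
    rcases r with _ | r
    · rcases hi.cover s with rfl | rfl | rfl
      · exact ⟨none, 0, by simp⟩
      · exact ⟨some e, 0, by simp⟩
      · exact ⟨some f, 0, by simp [upd2_f _ _ _ hef]⟩
    · by_cases hr : r = e
      · subst hr
        rcases ha.cover s with rfl | rfl | rfl
        · exact ⟨none, 1, by simp⟩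
        · exact ⟨some r, 1, by simp⟩
        · exact ⟨some f, 1, by simp [upd2_f _ _ _ hef]⟩
      · by_cases hr' : r = f
        · subst hr'
          rcases hb.cover s with rfl | rfl | rfl
          · exact ⟨none, 2, by simp⟩
          · exact ⟨some e, 2, by simp⟩
          · exact ⟨some r, 2, by simp [upd2_f _ _ _ hef]⟩
        · exact ⟨some r, s, by rw [upd2_ne _ _ _ hr hr']⟩
  · intro r
    by_cases hr : r = e
    · subst hr
      simpa [tri_eq_one] using h1
    · by_cases hr' : r = f
      · subst hr'
        rw [upd2_f _ _ _ hef]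
        simpa [tri_eq_one] using h2
      · rw [upd2_ne _ _ _ hr hr']; exact h.edge r

lemma NP.diagLe (hc : Fintype.card V = 3 * (Fintype.card I + 1)) (h : NP E φ) (hpm : ¬ HasPM E)
    {e f : I} (hef : e ≠ f) :
    DiagLe (fun i a b => tri E (φ none i) (φ (some e) a) (φ (some f) b)) := by
  intro i j k a a' a'' b b' b'' hi ha hb
  by_contra hlt
  have l1 := tri_le (E := E) (φ none i) (φ (some e) a) (φ (some f) b)
  have l2 := tri_le (E := E) (φ none j) (φ (some e) a') (φ (some f) b')
  have l3 := tri_le (E := E) (φ none k) (φ (some e) a'') (φ (some f) b'')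
  simp only at hlt
  have := h.swap2 hef hi ha hb (by omega) (by omega)
  refine hpm (this.pm hc ?_)
  simpa using tri_eq_one.1 (by omega : tri E (φ none i) (φ (some e) a) (φ (some f) b) = 1)

/-- Otherwise these two edges would replace the matching edge `e` and cover the uncovered triple. -/
lemma NP.slot (hc : Fintype.card V = 3 * (Fintype.card I + 1)) (h : NP E φ) (hpm : ¬ HasPM E)
    (e : I) {i j k a b c : Fin 3} (hi : D3 i j k) (ha : D3 a b c) :
    tri E (φ none j) (φ none k) (φ (some e) a) +
      tri E (φ none i) (φ (some e) b) (φ (some e) c) ≤ 1 := by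
  by_contra hlt
  have l1 := tri_le (E := E) (φ none i) (φ (some e) b) (φ (some e) c)
  have l2 := tri_le (E := E) (φ none j) (φ none k) (φ (some e) a)
  have := h.swap1 hi ha (e := e) (by omega)
  refine hpm (this.pm hc ?_)
  simpa using tri_eq_one.1 (by omega : tri E (φ none i) (φ (some e) b) (φ (some e) c) = 1)

/-- Number of edges `v x y` with `v` uncovered, `x` in the row `e`, `y` in the row `f`. -/
def S (E : Finset (Finset V)) (φ : Option I → Fin 3 → V) (e f : I) : ℕ :=
  ∑ i, ∑ a, ∑ b, tri E (φ none i) (φ (some e) a) (φ (some f) b)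

/-- Number of (ordered) edges `v w x` with `v, w` uncovered and `x` a fixed vertex. -/
def Xv (E : Finset (Finset V)) (φ : Option I → Fin 3 → V) (x : V) : ℕ :=
  ∑ i, ∑ k, tri E (φ none i) (φ none k) x

/-- The degrees of the uncovered vertices, sorted by the rows met by the other two vertices of an
edge; the uncovered triple itself is not an edge. -/
lemma NP.count (hc : Fintype.card V = 3 * (Fintype.card I + 1)) (hE : ∀ e ∈ E, e.card = 3)
    (h : NP E φ) (hpm : ¬ HasPM E) :
    2 * ∑ i, deg E (φ none i) =
      ∑ e, ∑ f, S E φ e f + 2 * ∑ e, ∑ a, Xv E φ (φ (some e) a) := by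
  have h0 : ∀ i k k', tri E (φ none i) (φ none k) (φ none k') = 0 := by
    intro i k k'
    by_cases c1 : i = k
    · rw [c1, tri_self hE]
    by_cases c2 : k = k'
    · rw [c2, tri_self' hE]
    by_cases c3 : i = k'
    · rw [c3, tri_self'' hE]
    have l := tri_le (E := E) (φ none i) (φ none k) (φ none k')
    by_contra hne
    have h1 := tri_eq_one.1 (by omega : tri E (φ none i) (φ none k) (φ none k') = 1)
    refine hpm (h.pm hc ?_)
    convert h1 using 1
    have d : D3 i k k' := ⟨c1, c2, c3⟩
    ext v
    simp only [Finset.mem_insert, Finset.mem_singleton]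
    revert d; unfold D3
    fin_cases i <;> fin_cases k <;> fin_cases k' <;> simp <;> tauto
  rw [Finset.mul_sum]
  have key : ∀ i, 2 * deg E (φ none i) =
      ∑ e, ∑ f, ∑ a, ∑ b, tri E (φ none i) (φ (some e) a) (φ (some f) b) +
      2 * ∑ e, ∑ a, ∑ k, tri E (φ none i) (φ none k) (φ (some e) a) := by
    intro i
    rw [two_deg hE, h.sum hc]
    have e1 : ∀ x, ∑ y, tri E (φ none i) x y = ∑ k, tri E (φ none i) x (φ none k) +
        ∑ f, ∑ b, tri E (φ none i) x (φ (some f) b) := fun x => h.sum hc _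
    simp only [e1, h0, Finset.sum_const_zero, zero_add, Finset.sum_add_distrib]
    have e2 : ∑ k, ∑ f, ∑ b, tri E (φ none i) (φ none k) (φ (some f) b) =
        ∑ e, ∑ a, ∑ k, tri E (φ none i) (φ none k) (φ (some e) a) := by
      rw [Finset.sum_comm]
      exact Finset.sum_congr rfl fun _ _ => Finset.sum_comm
    have e3 : ∀ e, ∑ a, ∑ k, tri E (φ none i) (φ (some e) a) (φ none k) =
        ∑ a, ∑ k, tri E (φ none i) (φ none k) (φ (some e) a) := fun e =>
      Finset.sum_congr rfl fun _ _ => Finset.sum_congr rfl fun _ _ => tri_swap' _ _ _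
    have e4 : ∀ e, ∑ a, ∑ f, ∑ b, tri E (φ none i) (φ (some e) a) (φ (some f) b) =
        ∑ f, ∑ a, ∑ b, tri E (φ none i) (φ (some e) a) (φ (some f) b) := fun e =>
      Finset.sum_comm
    simp only [e2, e3, e4]
    ring
  simp only [key, Finset.sum_add_distrib, ← Finset.mul_sum, S, Xv]
  congr 1
  · rw [Finset.sum_comm]
    exact Finset.sum_congr rfl fun _ _ => Finset.sum_comm
  · congr 1
    rw [Finset.sum_comm]
    exact Finset.sum_congr rfl fun _ _ => Finset.sum_comm

lemma Xv_eq (hE : ∀ e ∈ E, e.card = 3) (x : V) : Xv E φ x =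
    2 * (tri E (φ none 0) (φ none 1) x + tri E (φ none 0) (φ none 2) x +
      tri E (φ none 1) (φ none 2) x) := by
  simp only [Xv, Fin.sum_univ_three, tri_self hE]
  rw [tri_swap (φ none 1) (φ none 0), tri_swap (φ none 2) (φ none 0),
    tri_swap (φ none 2) (φ none 1)]
  ring

/-- The edges at the uncovered triple meeting the row `e` only, together with those having two
uncovered vertices: at most `36` (in the doubled count), and if there are at least `31`, then at
least seven of the nine triples `v w x` are edges. -/
lemma NP.row_le (hc : Fintype.card V = 3 * (Fintype.card I + 1)) (hE : ∀ e ∈ E, e.card = 3)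
    (h : NP E φ) (hpm : ¬ HasPM E) (e : I) :
    S E φ e e + 2 * ∑ a, Xv E φ (φ (some e) a) ≤ 36 ∧
    S E φ e e + 2 * ∑ a, Xv E φ (φ (some e) a) ≤ 18 + ∑ a, Xv E φ (φ (some e) a) := by
  have hS : S E φ e e = 2 * ∑ i, (tri E (φ none i) (φ (some e) 0) (φ (some e) 1) +
      tri E (φ none i) (φ (some e) 0) (φ (some e) 2) +
      tri E (φ none i) (φ (some e) 1) (φ (some e) 2)) := by
    rw [S, Finset.mul_sum]
    refine Finset.sum_congr rfl fun i _ => ?_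
    simp only [Fin.sum_univ_three, tri_self' hE]
    rw [tri_swap' _ (φ (some e) 1) (φ (some e) 0), tri_swap' _ (φ (some e) 2) (φ (some e) 0),
      tri_swap' _ (φ (some e) 2) (φ (some e) 1)]
    ring
  rw [hS]
  simp only [Xv_eq hE, Fin.sum_univ_three]
  have d0 : D3 (0 : Fin 3) 1 2 := by unfold D3; decide
  have d1 : D3 (1 : Fin 3) 0 2 := by unfold D3; decide
  have d2 : D3 (2 : Fin 3) 0 1 := by unfold D3; decide
  have := h.slot hc hpm e d0 d0
  have := h.slot hc hpm e d0 d1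
  have := h.slot hc hpm e d0 d2
  have := h.slot hc hpm e d1 d0
  have := h.slot hc hpm e d1 d1
  have := h.slot hc hpm e d1 d2
  have := h.slot hc hpm e d2 d0
  have := h.slot hc hpm e d2 d1
  have := h.slot hc hpm e d2 d2
  constructor <;> omega

end Near
end OreMatching

/-! ### From a near-perfect matching to a perfect one -/

namespace OreMatching
set_option linter.unusedSectionVars false

section Combin

/-- Inserting a vertex into a path; the head is tracked for the induction. -/
lemma redei_insert {α : Type*} (R : α → α → Prop) (x : α) (l : List α)
    (hR : ∀ y ∈ l, R x y ∨ R y x) (hl : l.IsChain R) :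
    ∃ l' : List α, l'.Perm (x :: l) ∧ l'.IsChain R ∧
      (l'.head? = some x ∨ l'.head? = l.head?) := by
  induction l with
  | nil => exact ⟨[x], List.Perm.refl _, by simp, Or.inl rfl⟩
  | cons y l ih =>
    rcases hR y (by simp) with h | h
    · exact ⟨x :: y :: l, List.Perm.refl _, by simp [h, hl], Or.inl rfl⟩
    · obtain ⟨l', hp, hc, hh⟩ := ih (fun z hz => hR z (by simp [hz])) hl.tail
      refine ⟨y :: l', (hp.cons y).trans (List.Perm.swap x y l), ?_, Or.inr rfl⟩
      rw [List.isChain_cons]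
      refine ⟨fun z hz => ?_, hc⟩
      rcases hh with hh | hh
      · rw [hh] at hz
        have : x = z := by simpa using hz
        exact this ▸ h
      · rw [hh] at hz
        rw [List.isChain_cons] at hl
        exact hl.1 z hz

/-- Rédei: a tournament has a Hamiltonian path. -/
lemma redei {α : Type*} (R : α → α → Prop) (l : List α) (hn : l.Nodup)
    (hR : ∀ x ∈ l, ∀ y ∈ l, x ≠ y → R x y ∨ R y x) :
    ∃ l' : List α, l'.Perm l ∧ l'.IsChain R := by
  induction l with
  | nil => exact ⟨[], List.Perm.refl _, by simp⟩
  | cons x l ih =>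
    rw [List.nodup_cons] at hn
    obtain ⟨l', hp, hc⟩ := ih hn.2
      (fun a ha b hb => hR a (by simp [ha]) b (by simp [hb]))
    obtain ⟨l'', hp', hc', -⟩ := redei_insert R x l' (fun y hy => by
      have hy' := hp.mem_iff.1 hy
      exact hR x (by simp) y (by simp [hy']) (by rintro rfl; exact hn.1 hy')) hc
    exact ⟨l'', hp'.trans (hp.cons x), hc'⟩

lemma redei_five (R : Fin 5 → Fin 5 → Prop) (hR : ∀ x y, x ≠ y → R x y ∨ R y x) :
    ∃ a b c d e, [a, b, c, d, e].Nodup ∧ R a b ∧ R b c ∧ R c d ∧ R d e := by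
  obtain ⟨l, hp, hc⟩ := redei R (List.finRange 5) (List.nodup_finRange 5)
    (fun x _ y _ h => hR x y h)
  have hn := hp.nodup_iff.2 (List.nodup_finRange 5)
  have hlen := hp.length_eq
  rw [List.length_finRange] at hlen
  match l, hlen with
  | [a, b, c, d, e], _ =>
    refine ⟨a, b, c, d, e, hn, ?_⟩
    simpa using hc

variable {I : Type*} [Fintype I] [DecidableEq I]

/-- Tuples with prescribed bad entries in three places: the other two places are free. -/
lemma card_tuples (B : Finset (I × I × I)) {i j k : Fin 5} (h : D3 i j k) :
    (Finset.univ.filter (fun t : Fin 5 → I => (t i, t j, t k) ∈ B)).card ≤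
      B.card * Fintype.card I ^ 2 := by
  classical
  have hcard : Fintype.card {x : Fin 5 // x ≠ i ∧ x ≠ j ∧ x ≠ k} = 2 := by
    unfold D3 at h
    revert i j k
    decide
  have : B.card * Fintype.card I ^ 2 =
      (B ×ˢ (Finset.univ : Finset ({x : Fin 5 // x ≠ i ∧ x ≠ j ∧ x ≠ k} → I))).card := by
    rw [Finset.card_product, Finset.card_univ, Fintype.card_fun, hcard]
  rw [this]
  refine Finset.card_le_card_of_injOn (fun t => ((t i, t j, t k), fun x => t x.1)) ?_ ?_
  · intro t ht
    simpa using ht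
  · intro t _ t' _ he
    simp only [Prod.mk.injEq] at he
    obtain ⟨⟨h1, h2, h3⟩, h4⟩ := he
    funext x
    by_cases hx : x ≠ i ∧ x ≠ j ∧ x ≠ k
    · exact congrFun h4 ⟨x, hx⟩
    · have : x = i ∨ x = j ∨ x = k := by tauto
      rcases this with rfl | rfl | rfl <;> assumption

/-- Five indices avoiding linearly many forbidden pairs and, for each index, linearly many
further forbidden pairs. -/
lemma exists_five (K : ℕ) (hm : 250 * K < Fintype.card I) (B2 : Finset (I × I))
    (h2 : B2.card ≤ K * Fintype.card I) (B3 : I → Finset (I × I))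
    (h3 : ∀ x, (B3 x).card ≤ K * Fintype.card I) :
    ∃ t : Fin 5 → I, ∀ i j k, D3 i j k → (t i, t j) ∉ B2 ∧ (t j, t k) ∉ B3 (t i) := by
  classical
  set m := Fintype.card I with hmdef
  let B : Finset (I × I × I) := Finset.univ.filter
    (fun q => (q.1, q.2.1) ∈ B2 ∨ (q.2.1, q.2.2) ∈ B3 q.1)
  have hB : B.card ≤ 2 * K * m ^ 2 := by
    have hsub : B ⊆ (B2 ×ˢ (Finset.univ : Finset I)).image (fun q => (q.1.1, q.1.2, q.2)) ∪
        Finset.univ.biUnion (fun x => (B3 x).image (fun q => (x, q.1, q.2))) := by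
      rintro ⟨x, y, z⟩ hq
      simp only [B, Finset.mem_filter, Finset.mem_univ, true_and] at hq
      simp only [Finset.mem_union, Finset.mem_image, Finset.mem_product, Finset.mem_univ,
        Finset.mem_biUnion, true_and, and_true]
      rcases hq with hq | hq
      · left; exact ⟨((x, y), z), hq, rfl⟩
      · right; exact ⟨x, (y, z), hq, rfl⟩
    refine (Finset.card_le_card hsub).trans ((Finset.card_union_le _ _).trans ?_)
    have e1 : ((B2 ×ˢ (Finset.univ : Finset I)).image
        (fun q => (q.1.1, q.1.2, q.2))).card ≤ K * m * m := by
      refine Finset.card_image_le.trans ?_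
      rw [Finset.card_product, Finset.card_univ]
      exact Nat.mul_le_mul_right _ h2
    have e2 : (Finset.univ.biUnion
        (fun x => (B3 x).image (fun q => (x, q.1, q.2)))).card ≤ m * (K * m) := by
      refine Finset.card_biUnion_le_card_mul _ _ _ fun x _ => ?_
      exact Finset.card_image_le.trans (h3 x)
    nlinarith
  by_contra hcon
  push Not at hcon
  have hcov : (Finset.univ : Finset (Fin 5 → I)) ⊆
      (Finset.univ : Finset (Fin 5 × Fin 5 × Fin 5)).biUnion (fun s =>
        if D3 s.1 s.2.1 s.2.2 then
          Finset.univ.filter (fun t : Fin 5 → I => (t s.1, t s.2.1, t s.2.2) ∈ B) else ∅) := by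
    intro t _
    obtain ⟨i, j, k, hd, hb⟩ := hcon t
    rw [Finset.mem_biUnion]
    refine ⟨(i, j, k), Finset.mem_univ _, ?_⟩
    rw [if_pos hd]
    simp only [B, Finset.mem_filter, Finset.mem_univ, true_and]
    tauto
  have hle := (Finset.card_le_card hcov).trans
    (Finset.card_biUnion_le_card_mul _ _ (2 * K * m ^ 2 * m ^ 2) (fun s _ => by
      split_ifs with hd
      · exact (card_tuples B hd).trans (Nat.mul_le_mul_right _ hB)
      · simp))
  rw [Finset.card_univ, Fintype.card_fun, Finset.card_univ, Fintype.card_fin] at hle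
  simp only [Fintype.card_prod, Fintype.card_fin, ← hmdef] at hle
  have hpos : 0 < m ^ 4 := pow_pos (by omega) 4
  have : m ^ 4 * m ≤ m ^ 4 * (250 * K) := by
    calc m ^ 4 * m = m ^ 5 := by ring
      _ ≤ _ := hle
      _ = m ^ 4 * (250 * K) := by ring
  have := Nat.le_of_mul_le_mul_left this hpos
  omega

end Combin

section PartB
variable {V : Type*} [Fintype V] [DecidableEq V] {I : Type*} [Fintype I] [DecidableEq I]
variable {E : Finset (Finset V)} {φ : Option I → Fin 3 → V}

lemma NP.S_le (hc : Fintype.card V = 3 * (Fintype.card I + 1)) (h : NP E φ) (hpm : ¬ HasPM E)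
    {e f : I} (hef : e ≠ f) : S E φ e f ≤ 18 := (h.diagLe hc hpm hef).total_le

lemma NP.count' (hc : Fintype.card V = 3 * (Fintype.card I + 1)) (hE : ∀ e ∈ E, e.card = 3)
    (h : NP E φ) (hpm : ¬ HasPM E) :
    2 * ∑ i, deg E (φ none i) =
      ∑ e, ∑ f, (S E φ e f + if e = f then 2 * ∑ a, Xv E φ (φ (some e) a) else 0) := by
  rw [h.count hc hE hpm]
  simp only [Finset.sum_add_distrib, Finset.sum_ite_eq, Finset.mem_univ, if_true,
    ← Finset.mul_sum]

lemma sum_diag (c d : ℕ) : ∑ e : I, ∑ f : I, (c + if e = f then d else 0) =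
    c * Fintype.card I ^ 2 + d * Fintype.card I := by
  simp only [Finset.sum_add_distrib, Finset.sum_ite_eq, Finset.mem_univ, if_true,
    Finset.sum_const, Finset.card_univ, smul_eq_mul]
  ring

/-- The pairs of matching edges at which the count of edges through the uncovered triple is not
extremal. -/
def NT (E : Finset (Finset V)) (φ : Option I → Fin 3 → V) : Finset (I × I) :=
  Finset.univ.filter (fun q => q.1 ≠ q.2 ∧ S E φ q.1 q.2 ≠ 18)

/-- Almost all pairs of matching edges are extremal once the uncovered vertices have degree at
least `3m² - m`. -/
lemma NP.nt_le (hc : Fintype.card V = 3 * (Fintype.card I + 1)) (hE : ∀ e ∈ E, e.card = 3)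
    (h : NP E φ) (hpm : ¬ HasPM E)
    (hg : ∀ i, 3 * Fintype.card I ^ 2 ≤ deg E (φ none i) + Fintype.card I) :
    (NT E φ).card ≤ 24 * Fintype.card I := by
  have hcnt := h.count' hc hE hpm
  have hNT : (NT E φ).card = ∑ e, ∑ f, if e ≠ f ∧ S E φ e f ≠ 18 then 1 else 0 := by
    rw [NT, Finset.card_filter, ← Finset.univ_product_univ, Finset.sum_product]
  have : 2 * ∑ i, deg E (φ none i) + (NT E φ).card ≤
      18 * Fintype.card I ^ 2 + 18 * Fintype.card I := by
    rw [hcnt, hNT, ← Finset.sum_add_distrib, ← sum_diag]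
    refine Finset.sum_le_sum fun e _ => ?_
    rw [← Finset.sum_add_distrib]
    refine Finset.sum_le_sum fun f _ => ?_
    by_cases hef : e = f
    · subst hef
      have := (h.row_le hc hE hpm e).1
      simp; omega
    · have := h.S_le hc hpm hef
      simp only [hef, if_false, ne_eq, not_false_eq_true, true_and]
      split_ifs <;> omega
  have h0 := hg 0; have h1 := hg 1; have h2 := hg 2
  rw [Fin.sum_univ_three] at this
  omega

lemma NP.sum_le (hc : Fintype.card V = 3 * (Fintype.card I + 1)) (hE : ∀ e ∈ E, e.card = 3)
    (h : NP E φ) (hpm : ¬ HasPM E) :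
    2 * ∑ i, deg E (φ none i) ≤ 18 * Fintype.card I ^ 2 + 18 * Fintype.card I := by
  rw [h.count' hc hE hpm, ← sum_diag]
  refine Finset.sum_le_sum fun e _ => Finset.sum_le_sum fun f _ => ?_
  by_cases hef : e = f
  · subst hef
    have := (h.row_le hc hE hpm e).1
    simp; omega
  · have := h.S_le hc hpm hef
    simp only [hef, if_false]; omega

/-- Some matching edge forms at least seven of the nine possible triples with two uncovered
vertices: `Xv` counts each twice and is even. -/
lemma NP.exists_row (hc : Fintype.card V = 3 * (Fintype.card I + 1)) (hE : ∀ e ∈ E, e.card = 3)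
    (h : NP E φ) (hpm : ¬ HasPM E)
    (hv : ∀ i, 3 * Fintype.card I ^ 2 + 2 * Fintype.card I + 1 ≤ deg E (φ none i)) :
    ∃ e, 13 ≤ ∑ a, Xv E φ (φ (some e) a) := by
  by_contra hcon
  push Not at hcon
  have : 2 * ∑ i, deg E (φ none i) ≤ 18 * Fintype.card I ^ 2 + 12 * Fintype.card I := by
    rw [h.count' hc hE hpm, ← sum_diag]
    refine Finset.sum_le_sum fun e _ => Finset.sum_le_sum fun f _ => ?_
    by_cases hef : e = f
    · subst hef
      have := (h.row_le hc hE hpm e).2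
      have := hcon e
      simp; omega
    · have := h.S_le hc hpm hef
      simp only [hef, if_false]; omega
  have h0 := hv 0; have h1 := hv 1; have h2 := hv 2
  rw [Fin.sum_univ_three] at this
  omega

/-- The row `e` dominates the row `f`: all three uncovered vertices have the same link between
the two rows, consisting of all pairs avoiding one vertex of the row `e`. -/
def Orient (E : Finset (Finset V)) (φ : Option I → Fin 3 → V) (e f : I) : Prop :=
  ∃ a0, ∀ i a b, tri E (φ none i) (φ (some e) a) (φ (some f) b) = if a = a0 then 0 else 1

/-- The hypotheses shared by the lemmas about a fixed near-perfect matching. -/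
structure Setup (E : Finset (Finset V)) (φ : Option I → Fin 3 → V) : Prop where
  hc : Fintype.card V = 3 * (Fintype.card I + 1)
  hE : ∀ e ∈ E, e.card = 3
  hpm : ¬ HasPM E
  ore : ∀ u v, u ≠ v → (∃ e ∈ E, u ∈ e ∧ v ∈ e) →
    6 * Fintype.card I ^ 2 + 4 * Fintype.card I + 1 ≤ deg E u + deg E v
  np : NP E φ
  hv : ∀ i, 3 * Fintype.card I ^ 2 + 2 * Fintype.card I + 1 ≤ deg E (φ none i)

lemma Setup.good_none (s : Setup E φ) (i : Fin 3) :
    3 * Fintype.card I ^ 2 ≤ deg E (φ none i) + Fintype.card I := by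
  have := s.hv i; omega

/-- Neighbours of uncovered vertices have large degree: the uncovered vertices cannot have too
large a degree, so the degree-sum condition applies. -/
lemma Setup.good_adj (s : Setup E φ) {i : Fin 3} {x y : V} (h : tri E (φ none i) x y = 1) :
    3 * Fintype.card I ^ 2 ≤ deg E x + Fintype.card I := by
  have hne : φ none i ≠ x := by
    intro he; rw [he, tri_self s.hE] at h; omega
  have ho := s.ore _ _ hne ⟨_, tri_eq_one.1 h, by simp, by simp⟩
  have hs := s.np.sum_le s.hc s.hE s.hpm
  obtain ⟨j, k, hi⟩ := exists_D3 i
  rw [hi.sum] at hs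
  have := s.hv j; have := s.hv k
  omega

/-- Almost all pairs of rows are oriented. An extremal pair could also have its zeros at a single
uncovered vertex; this is excluded by comparing with the near-perfect matchings in which a matching
edge provided by `NP.exists_row` takes part in an exchange with each uncovered vertex in turn. -/
lemma Setup.orient_most (s : Setup E φ) :
    ∃ B : Finset (I × I), B.card ≤ 99 * Fintype.card I ∧
      ∀ f g, (f, g) ∉ B → f ≠ g ∧ (Orient E φ f g ∨ Orient E φ g f) := by
  classical
  obtain ⟨e, he⟩ := s.np.exists_row s.hc s.hE s.hpm s.hv
  have hX := fun x : V => Xv_eq (E := E) (φ := φ) s.hE x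
  have hX6 : ∀ a, Xv E φ (φ (some e) a) ≤ 6 := by
    intro a; rw [hX]
    have := tri_le (E := E) (φ none 0) (φ none 1) (φ (some e) a)
    have := tri_le (E := E) (φ none 0) (φ none 2) (φ (some e) a)
    have := tri_le (E := E) (φ none 1) (φ none 2) (φ (some e) a)
    omega
  obtain ⟨a, ha⟩ : ∃ a, Xv E φ (φ (some e) a) = 6 := by
    by_contra hcon
    push Not at hcon
    have h4 : ∀ a, Xv E φ (φ (some e) a) ≤ 4 := by
      intro a
      have := hcon a; have := hX6 a
      rw [hX] at *; omega
    rw [Fin.sum_univ_three] at he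
    have := h4 0; have := h4 1; have := h4 2
    omega
  have hpairs : ∀ j k, j ≠ k → tri E (φ none j) (φ none k) (φ (some e) a) = 1 := by
    rw [hX] at ha
    have := tri_le (E := E) (φ none 0) (φ none 1) (φ (some e) a)
    have := tri_le (E := E) (φ none 0) (φ none 2) (φ (some e) a)
    have := tri_le (E := E) (φ none 1) (φ none 2) (φ (some e) a)
    have e01 := tri_swap (E := E) (φ none 0) (φ none 1) (φ (some e) a)
    have e02 := tri_swap (E := E) (φ none 0) (φ none 2) (φ (some e) a)
    have e12 := tri_swap (E := E) (φ none 1) (φ none 2) (φ (some e) a)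
    intro j k hjk
    fin_cases j <;> fin_cases k <;> simp at hjk ⊢ <;> omega
  have hgood : ∀ b, 3 * Fintype.card I ^ 2 ≤ deg E (φ (some e) b) + Fintype.card I := by
    intro b
    have hpos : 1 ≤ Xv E φ (φ (some e) b) := by
      obtain ⟨b', b'', hb⟩ := exists_D3 b
      rw [hb.sum] at he
      have := hX6 b'; have := hX6 b''
      omega
    obtain ⟨i, k, hik⟩ : ∃ i k, tri E (φ none i) (φ none k) (φ (some e) b) = 1 := by
      by_contra hcon
      push Not at hcon
      have hz : ∀ i k, tri E (φ none i) (φ none k) (φ (some e) b) = 0 := by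
        intro i k
        have := hcon i k
        have := tri_le (E := E) (φ none i) (φ none k) (φ (some e) b)
        omega
      simp [Xv, hz] at hpos
    rw [tri_swap'] at hik
    exact s.good_adj hik
  obtain ⟨b, c, hab⟩ := exists_D3 a
  choose j k hijk using exists_D3
  let ψ : Fin 3 → Option I → Fin 3 → V := fun i =>
    upd1 φ e ![φ none i, φ (some e) b, φ (some e) c] ![φ none (j i), φ none (k i), φ (some e) a]
  have hψ : ∀ i, NP E (ψ i) := fun i => s.np.swap1 (hijk i) hab (hpairs _ _ (hijk i).2.1)
  have hNT : ∀ i, (NT E (ψ i)).card ≤ 24 * Fintype.card I := by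
    intro i
    refine (hψ i).nt_le s.hc s.hE s.hpm fun r => ?_
    fin_cases r
    · simpa [ψ] using s.good_none i
    · simpa [ψ] using hgood b
    · simpa [ψ] using hgood c
  have hNT0 := s.np.nt_le s.hc s.hE s.hpm s.good_none
  let B : Finset (I × I) := (Finset.univ.image (fun x => (x, x)) ∪
    Finset.univ.image (fun x => (e, x)) ∪ Finset.univ.image (fun x => (x, e))) ∪
    (NT E φ ∪ Finset.univ.biUnion (fun i => NT E (ψ i)))
  refine ⟨B, ?_, ?_⟩
  · have c1 : (Finset.univ.image (fun x : I => (x, x))).card ≤ Fintype.card I :=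
      Finset.card_image_le
    have c2 : (Finset.univ.image (fun x : I => (e, x))).card ≤ Fintype.card I :=
      Finset.card_image_le
    have c3 : (Finset.univ.image (fun x : I => (x, e))).card ≤ Fintype.card I :=
      Finset.card_image_le
    have c4 : (Finset.univ.biUnion (fun i => NT E (ψ i))).card ≤ 3 * (24 * Fintype.card I) := by
      have := Finset.card_biUnion_le_card_mul (Finset.univ : Finset (Fin 3))
        (fun i => NT E (ψ i)) _ (fun i _ => hNT i)
      simpa using this
    have u1 := Finset.card_union_le (Finset.univ.image (fun x => (x, x)) ∪
      Finset.univ.image (fun x => (e, x)) ∪ Finset.univ.image (fun x => (x, e)))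
      (NT E φ ∪ Finset.univ.biUnion (fun i => NT E (ψ i)))
    have u2 := Finset.card_union_le (Finset.univ.image (fun x => (x, x)) ∪
      Finset.univ.image (fun x => (e, x))) (Finset.univ.image (fun x => (x, e)))
    have u3 := Finset.card_union_le (Finset.univ.image (fun x => (x, x)))
      (Finset.univ.image (fun x => (e, x)))
    have u4 := Finset.card_union_le (NT E φ) (Finset.univ.biUnion (fun i => NT E (ψ i)))
    simp only [B]
    omega
  · intro f g hfg
    simp only [B, Finset.mem_union, Finset.mem_image, Finset.mem_univ, true_and,
      Finset.mem_biUnion, NT, Finset.mem_filter, Prod.mk.injEq, not_or, not_exists, not_and,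
      not_not] at hfg
    obtain ⟨⟨⟨n1, n2⟩, n3⟩, n4, n5⟩ := hfg
    have hne : f ≠ g := fun h => n1 f rfl h
    have hfe : f ≠ e := fun h => n2 g h.symm rfl
    have hge : g ≠ e := fun h => n3 f rfl h.symm
    refine ⟨hne, ?_⟩
    have t0 := n4 hne
    -- the links of the three uncovered vertices between `f` and `g` have the same size
    have hsame : ∀ i, ∑ x, ∑ y, tri E (φ none i) (φ (some f) x) (φ (some g) y) =
        ∑ x, ∑ y, tri E (φ none 0) (φ (some f) x) (φ (some g) y) := by
      have hS : ∀ i, ∑ x, ∑ y, tri E (φ none i) (φ (some f) x) (φ (some g) y) +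
          ∑ x, ∑ y, tri E (φ (some e) b) (φ (some f) x) (φ (some g) y) +
          ∑ x, ∑ y, tri E (φ (some e) c) (φ (some f) x) (φ (some g) y) = 18 := by
        intro i
        have := n5 i hne
        rw [S, Fin.sum_univ_three] at this
        simpa [ψ, upd1_ne _ _ hfe, upd1_ne _ _ hge] using this
      intro i
      have := hS i; have := hS 0
      omega
    rcases tight_pattern (fun _ _ _ => tri_le _ _ _) (s.np.diagLe s.hc s.hpm hne) t0 with
      ⟨i0, hp⟩ | ⟨a0, hp⟩ | ⟨b0, hp⟩
    · exfalso
      obtain ⟨i1, i2, hi⟩ := exists_D3 i0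
      have q1 := hsame i0; have q2 := hsame i1
      simp only [hp] at q1 q2
      rw [if_neg hi.1.symm] at q2
      simp at q1 q2
      omega
    · exact Or.inl ⟨a0, hp⟩
    · refine Or.inr ⟨b0, fun i x y => ?_⟩
      rw [tri_swap']; exact hp i y x

/-- The pairs of rows between which the links of `w` and of the uncovered vertices differ. -/
noncomputable def Diff (E : Finset (Finset V)) (φ : Option I → Fin 3 → V) (w : V) :
    Finset (I × I) := by
  classical
  exact Finset.univ.filter (fun q => ∃ a c, tri E w (φ (some q.1) a) (φ (some q.2) c) ≠
    tri E (φ none 0) (φ (some q.1) a) (φ (some q.2) c))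

/-- After two steps of domination, every vertex of the last row has nearly the same link as the
uncovered vertices, since it can itself be made an uncovered vertex by an exchange. -/
lemma Setup.diff_le (s : Setup E φ) {B : Finset (I × I)} (hB : B.card ≤ 99 * Fintype.card I)
    (hB' : ∀ f g, (f, g) ∉ B → f ≠ g ∧ (Orient E φ f g ∨ Orient E φ g f))
    {e f g : I} (hfg : f ≠ g) (h1 : Orient E φ e f) (h2 : Orient E φ f g) (b : Fin 3) :
    (Diff E φ (φ (some g) b)).card ≤ 127 * Fintype.card I := by
  classical
  obtain ⟨x0, hx0⟩ := h1
  obtain ⟨a0, ha0⟩ := h2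
  obtain ⟨x1, x2, hx⟩ := exists_D3 x0
  obtain ⟨a1, a2, ha⟩ := exists_D3 a0
  obtain ⟨b1, b2, hb⟩ := exists_D3 b
  have d : D3 (2 : Fin 3) 0 1 := by unfold D3; decide
  have hf : ∀ y, 3 * Fintype.card I ^ 2 ≤ deg E (φ (some f) y) + Fintype.card I := by
    intro y
    refine s.good_adj (i := 0) (y := φ (some e) x1) ?_
    rw [tri_swap', hx0, if_neg hx.1.symm]
  have hg : ∀ y, 3 * Fintype.card I ^ 2 ≤ deg E (φ (some g) y) + Fintype.card I := by
    intro y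
    refine s.good_adj (i := 0) (y := φ (some f) a1) ?_
    rw [tri_swap', ha0, if_neg ha.1.symm]
  have hψ := s.np.swap2 hfg d ha hb (by rw [ha0, if_neg ha.1.symm])
    (by rw [ha0, if_neg ha.2.2.symm])
  set ψ := upd2 φ f g ![φ none 2, φ (some f) a0, φ (some g) b]
      ![φ none 0, φ (some f) a1, φ (some g) b1]
      ![φ none 1, φ (some f) a2, φ (some g) b2] with hψdef
  have hNT : (NT E ψ).card ≤ 24 * Fintype.card I := by
    refine hψ.nt_le s.hc s.hE s.hpm fun r => ?_
    fin_cases r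
    · simpa [ψ] using s.good_none 2
    · simpa [ψ] using hf a0
    · simpa [ψ] using hg b
  have hsub : Diff E φ (φ (some g) b) ⊆ (B ∪ NT E ψ) ∪
      ((Finset.univ.image (fun x => (f, x)) ∪ Finset.univ.image (fun x => (x, f))) ∪
      (Finset.univ.image (fun x => (g, x)) ∪ Finset.univ.image (fun x => (x, g)))) := by
    rintro ⟨h, k⟩ hhk
    by_contra hn
    simp only [Finset.mem_union, Finset.mem_image, Finset.mem_univ, true_and,
      NT, Finset.mem_filter, Prod.mk.injEq, not_or, not_exists, not_and,
      not_not] at hn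
    obtain ⟨⟨nB, nT⟩, ⟨n1, n2⟩, n3, n4⟩ := hn
    obtain ⟨hne, hor⟩ := hB' h k nB
    have hhf : h ≠ f := fun q => n1 k q.symm rfl
    have hkf : k ≠ f := fun q => n2 h rfl q.symm
    have hhg : h ≠ g := fun q => n3 k q.symm rfl
    have hkg : k ≠ g := fun q => n4 h rfl q.symm
    have t := nT hne
    have e1 : ψ (some h) = φ (some h) := upd2_ne _ _ _ hhf hhg
    have e2 : ψ (some k) = φ (some k) := upd2_ne _ _ _ hkf hkg
    have r0 : ψ none 0 = φ none 2 := by simp [ψ]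
    have r2 : ψ none 2 = φ (some g) b := by simp [ψ]
    have hsame : ∀ i a c, tri E (φ none i) (φ (some h) a) (φ (some k) c) =
        tri E (φ none 0) (φ (some h) a) (φ (some k) c) := by
      intro i a c
      rcases hor with ⟨y, hy⟩ | ⟨y, hy⟩
      · rw [hy, hy]
      · rw [tri_swap', hy, tri_swap' (φ none 0), hy]
    -- the cube of the exchanged matching is not constant on the layer of `φ none 2`, so its zeros
    -- form a layer in one of the two rows
    have hnc : ∃ a c a' c', tri E (φ none 2) (φ (some h) a) (φ (some k) c) ≠
        tri E (φ none 2) (φ (some h) a') (φ (some k) c') := by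
      rcases hor with ⟨y, hy⟩ | ⟨y, hy⟩
      · obtain ⟨y1, y2, hyy⟩ := exists_D3 y
        refine ⟨y, 0, y1, 0, ?_⟩
        rw [hy, hy, if_pos rfl, if_neg hyy.1.symm]; omega
      · obtain ⟨y1, y2, hyy⟩ := exists_D3 y
        refine ⟨0, y, 0, y1, ?_⟩
        rw [tri_swap', hy, tri_swap', hy, if_pos rfl, if_neg hyy.1.symm]; omega
    have hdiff : ∃ a c, tri E (φ (some g) b) (φ (some h) a) (φ (some k) c) ≠
        tri E (φ none 0) (φ (some h) a) (φ (some k) c) := by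
      simpa [Diff] using hhk
    obtain ⟨a, c, hac⟩ := hdiff
    rw [← hsame 2, ← r0, ← r2, ← e1, ← e2] at hac
    obtain ⟨a1, c1, a2, c2, hnc⟩ := hnc
    rw [← r0, ← e1, ← e2] at hnc
    rcases tight_pattern (fun _ _ _ => tri_le _ _ _) (hψ.diagLe s.hc s.hpm hne) t with
      ⟨i0, hp⟩ | ⟨a0, hp⟩ | ⟨b0, hp⟩
    · rw [hp, hp] at hnc; exact hnc rfl
    · rw [hp, hp] at hac; exact hac rfl
    · rw [hp, hp] at hac; exact hac rfl
  refine (Finset.card_le_card hsub).trans ?_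
  have c1 : ∀ y : I, (Finset.univ.image (fun x : I => (y, x))).card ≤ Fintype.card I :=
    fun y => Finset.card_image_le
  have c2 : ∀ y : I, (Finset.univ.image (fun x : I => (x, y))).card ≤ Fintype.card I :=
    fun y => Finset.card_image_le
  have := c1 f; have := c2 f; have := c1 g; have := c2 g
  refine (Finset.card_union_le _ _).trans ?_
  have u1 := Finset.card_union_le B (NT E ψ)
  have u2 := Finset.card_union_le
    (Finset.univ.image (fun x => (f, x)) ∪ Finset.univ.image (fun x => (x, f)))
    (Finset.univ.image (fun x => (g, x)) ∪ Finset.univ.image (fun x => (x, g)))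
  have u3 := Finset.card_union_le (Finset.univ.image (fun x => (f, x)))
    (Finset.univ.image (fun x => (x, f)))
  have u4 := Finset.card_union_le (Finset.univ.image (fun x => (g, x)))
    (Finset.univ.image (fun x => (x, g)))
  omega

/-- Under the degree-sum condition, a near-perfect matching whose uncovered vertices have degree
above half of the bound cannot exist without a perfect matching. -/
theorem Setup.false (s : Setup E φ) (hm : 100000 ≤ Fintype.card I) : False := by
  classical
  obtain ⟨B, hB, hB'⟩ := s.orient_most
  let B3 : I → Finset (I × I) := fun x =>
    if ∀ b, (Diff E φ (φ (some x) b)).card ≤ 127 * Fintype.card I then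
      Finset.univ.biUnion (fun b => Diff E φ (φ (some x) b)) else ∅
  have hB3 : ∀ x, (B3 x).card ≤ 381 * Fintype.card I := by
    intro x
    simp only [B3]
    split_ifs with hx
    · have := Finset.card_biUnion_le_card_mul (Finset.univ : Finset (Fin 3))
        (fun b => Diff E φ (φ (some x) b)) _ (fun b _ => hx b)
      rw [Finset.card_univ, Fintype.card_fin] at this
      omega
    · simp
  obtain ⟨t, ht⟩ := exists_five 381 (by omega) B (by omega) B3 hB3
  have h5 : ∀ i j : Fin 5, i ≠ j → ∃ k, D3 i j k := by unfold D3; decide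
  have hor : ∀ i j : Fin 5, i ≠ j → t i ≠ t j ∧
      (Orient E φ (t i) (t j) ∨ Orient E φ (t j) (t i)) := by
    intro i j hij
    obtain ⟨k, hk⟩ := h5 i j hij
    exact hB' _ _ (ht i j k hk).1
  obtain ⟨a, b, c, d, e, hn, hab, hbc, hcd, hde⟩ :=
    redei_five (fun i j => Orient E φ (t i) (t j)) (fun i j h => (hor i j h).2)
  simp only [List.nodup_cons, List.mem_cons, not_or, List.not_mem_nil, not_false_eq_true,
    List.nodup_nil, and_true] at hn
  have hWc : ∀ y, (Diff E φ (φ (some (t c)) y)).card ≤ 127 * Fintype.card I :=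
    fun y => s.diff_le hB hB' (hor b c (by tauto)).1 hab hbc y
  have hWe : ∀ y, (Diff E φ (φ (some (t e)) y)).card ≤ 127 * Fintype.card I :=
    fun y => s.diff_le hB hB' (hor d e (by tauto)).1 hcd hde y
  have key : ∀ {x y z : Fin 5}, D3 x y z →
      (∀ b, (Diff E φ (φ (some (t x)) b)).card ≤ 127 * Fintype.card I) → ∀ b r q,
      tri E (φ (some (t x)) b) (φ (some (t y)) r) (φ (some (t z)) q) =
        tri E (φ none 0) (φ (some (t y)) r) (φ (some (t z)) q) := by
    intro x y z hxyz hW b r q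
    have := (ht x y z hxyz).2
    simp only [B3, if_pos hW, Finset.mem_biUnion, Finset.mem_univ, true_and, not_exists] at this
    have := this b
    simp only [Diff, Finset.mem_filter, Finset.mem_univ, true_and, not_exists, not_not] at this
    exact this r q
  obtain ⟨x0, hx0⟩ := hcd
  obtain ⟨y0, hy0⟩ := hde
  obtain ⟨x1, _, hx⟩ := exists_D3 x0
  -- `x = (c, x1)`, `y = (d, y0)`, `z = (e, 0)`: the link of `z` contains `x y`, that of `x`
  -- does not contain `y z`.
  have k1 := key (x := e) (y := c) (z := d) ⟨by tauto, by tauto, by tauto⟩ hWe 0 x1 y0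
  have k2 := key (x := c) (y := d) (z := e) ⟨by tauto, by tauto, by tauto⟩ hWc x1 y0 0
  rw [hx0, if_neg hx.1.symm] at k1
  rw [hy0, if_pos rfl] at k2
  rw [tri_swap, tri_swap'] at k1
  omega

end PartB
end OreMatching

/-! ### Rainbow matchings by shifting -/

namespace OreMatching

section Rainbow
open UV
open scoped FinsetFamily

/-- A choice of one member from each family `G i`, pairwise disjoint. -/
def IsRainbow {ι W : Type*} [DecidableEq W] (G : ι → Finset (Finset W)) (f : ι → Finset W) :
    Prop :=
  (∀ i, f i ∈ G i) ∧ ∀ i j, i ≠ j → Disjoint (f i) (f j)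

lemma compress_single {W : Type*} [DecidableEq W] {a b : W} {e : Finset W} (hab : a ≠ b)
    (ha : a ∉ e) (hb : b ∈ e) : compress {a} {b} e = e.image (Equiv.swap a b) := by
  rw [compress, if_pos ⟨by simpa using ha, by simpa using hb⟩]
  ext x
  simp only [Finset.sup_eq_union, Finset.mem_sdiff, Finset.mem_union, Finset.mem_singleton,
    Finset.mem_image]
  constructor
  · rintro ⟨hx | rfl, hxb⟩
    · refine ⟨x, hx, Equiv.swap_apply_of_ne_of_ne ?_ hxb⟩
      rintro rfl; exact ha hx
    · exact ⟨b, hb, Equiv.swap_apply_right _ _⟩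
  · rintro ⟨y, hy, rfl⟩
    have hya : y ≠ a := by rintro rfl; exact ha hy
    by_cases hyb : y = b
    · subst hyb
      rw [Equiv.swap_apply_right]
      exact ⟨Or.inr rfl, hab⟩
    · rw [Equiv.swap_apply_of_ne_of_ne hya hyb]
      exact ⟨Or.inl hy, hyb⟩

/-- Compressing all families simultaneously creates no rainbow matching: a rainbow matching using a
new edge is mapped by the transposition of `a` and `b` to one of the original families. -/
lemma IsRainbow.of_compression {ι W : Type*} [DecidableEq W] {G : ι → Finset (Finset W)} {a b : W}
    (hab : a ≠ b) {f : ι → Finset W} (hf : IsRainbow (fun i => 𝓒 {a} {b} (G i)) f) :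
    ∃ f', IsRainbow G f' := by
  by_cases hall : ∀ i, f i ∈ G i
  · exact ⟨f, hall, hf.2⟩
  push Not at hall
  obtain ⟨j, hj⟩ := hall
  -- a new edge contains `a`, misses `b`, and is the transposed image of an old edge
  have new : ∀ i, f i ∉ G i → a ∈ f i ∧ b ∉ f i ∧ (f i).image (Equiv.swap a b) ∈ G i := by
    intro i hi
    rcases mem_compression.1 (hf.1 i) with h | ⟨-, e, he, hc⟩
    · exact absurd h.1 hi
    · by_cases hd : a ∉ e ∧ b ∈ e
      · rw [compress_single hab hd.1 hd.2] at hc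
        rw [← hc]
        refine ⟨Finset.mem_image.2 ⟨b, hd.2, by simp⟩, ?_, ?_⟩
        · intro hb
          obtain ⟨y, hy, hyb⟩ := Finset.mem_image.1 hb
          have : y = a := by
            exact (Equiv.swap a b).injective (hyb.trans (Equiv.swap_apply_left a b).symm)
          exact hd.1 (this ▸ hy)
        · rw [Finset.image_image]
          convert he
          ext x; simp
      · rw [compress, if_neg (by simpa using hd)] at hc
        exact absurd (hc ▸ he) hi
  obtain ⟨haj, hbj, hsj⟩ := new j hj
  refine ⟨fun i => (f i).image (Equiv.swap a b), fun i => ?_, fun i k hik => ?_⟩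
  · by_cases hij : i = j
    · subst hij; exact hsj
    have hai : a ∉ f i := fun h => Finset.disjoint_left.1 (hf.2 i j hij) h haj
    have hi : f i ∈ G i := by
      by_contra h
      exact hai (new i h).1
    by_cases hbi : b ∈ f i
    · rcases mem_compression.1 (hf.1 i) with h | h
      · rw [compress_single hab hai hbi] at h
        exact h.2
      · exact absurd hi h.1
    · have : (f i).image (Equiv.swap a b) = f i := by
        conv_rhs => rw [← Finset.image_id (s := f i)]
        refine Finset.image_congr fun x hx => ?_
        refine Equiv.swap_apply_of_ne_of_ne ?_ ?_
        · rintro rfl; exact hai hx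
        · rintro rfl; exact hbi hx
      simp only [this, hi]
  · rw [Finset.disjoint_image (Equiv.swap a b).injective]
    exact hf.2 i k hik

/-- The potential decreased by compressions towards smaller vertices. -/
def weight {h : ℕ} (s : Finset (Finset (Fin h))) : ℕ := ∑ e ∈ s, ∑ x ∈ e, x.val

lemma weight_compress_lt {h : ℕ} {a b : Fin h} (hab : a < b) {e : Finset (Fin h)}
    (hne : compress {a} {b} e ≠ e) :
    ∑ x ∈ compress {a} {b} e, x.val < ∑ x ∈ e, x.val := by
  by_cases hd : a ∉ e ∧ b ∈ e
  · rw [compress, if_pos ⟨by simpa using hd.1, by simpa using hd.2⟩]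
    have h1 : (e ⊔ {a}) \ {b} = insert a (e.erase b) := by
      ext x
      simp only [Finset.sup_eq_union, Finset.mem_sdiff, Finset.mem_union, Finset.mem_singleton,
        Finset.mem_insert, Finset.mem_erase]
      have := hab.ne
      grind
    rw [h1, Finset.sum_insert (by simp [hd.1]), ← Finset.add_sum_erase e _ hd.2]
    have : a.val < b.val := hab
    omega
  · rw [compress, if_neg (by simpa using hd)] at hne
    exact absurd rfl hne

lemma weight_compression_lt {h : ℕ} {a b : Fin h} (hab : a < b) {s : Finset (Finset (Fin h))}
    (hne : 𝓒 {a} {b} s ≠ s) : weight (𝓒 {a} {b} s) < weight s := by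
  have hdis := compress_disjoint (s := s) (u := ({a} : Finset (Fin h))) (v := {b})
  have hcard := card_compression ({a} : Finset (Fin h)) {b} s
  rw [compression] at hne hcard ⊢
  rw [weight, weight, Finset.sum_union hdis,
    ← Finset.sum_filter_add_sum_filter_not s (fun e => compress {a} {b} e ∈ s)]
  refine Nat.add_lt_add_left ?_ _
  have himg : ({e ∈ s.image (compress {a} {b}) | e ∉ s} : Finset _) =
      ({e ∈ s | compress {a} {b} e ∉ s} : Finset _).image (compress {a} {b}) := by
    rw [Finset.filter_image]
  have hinj : Set.InjOn (compress {a} {b})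
      (({e ∈ s | compress {a} {b} e ∉ s} : Finset (Finset (Fin h))) : Set (Finset (Fin h))) := by
    intro x hx y hy hxy
    simp only [Finset.coe_filter, Set.mem_ofPred_eq] at hx hy
    exact compress_injOn (u := {a}) (v := {b}) (s := s) (by simpa using hx) (by simpa using hy) hxy
  rw [himg, Finset.sum_image hinj]
  have hmoved : ∀ e ∈ ({e ∈ s | compress {a} {b} e ∉ s} : Finset (Finset (Fin h))),
      ∑ x ∈ compress {a} {b} e, x.val < ∑ x ∈ e, x.val := by
    intro e he
    rw [Finset.mem_filter] at he
    refine weight_compress_lt hab fun hh => he.2 (hh.symm ▸ he.1)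
  refine Finset.sum_lt_sum_of_nonempty ?_ hmoved
  rw [Finset.nonempty_iff_ne_empty]
  intro hem
  rw [himg, hem] at hne
  apply hne
  rw [Finset.image_empty, Finset.union_empty]
  rw [Finset.filter_eq_empty_iff] at hem
  rw [Finset.filter_eq_self]
  intro x hx
  have := hem hx
  tauto

/-- A shifted family of pairs missing `{i, j}` misses every pair dominating it. -/
lemma shifted_mem {h : ℕ} {s : Finset (Finset (Fin h))}
    (hs : ∀ a b : Fin h, a < b → 𝓒 {a} {b} s = s) {i j x y : Fin h} (hij : i < j) (hix : i ≤ x)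
    (hxy : x < y) (hjy : j ≤ y) (hm : ({x, y} : Finset (Fin h)) ∈ s) :
    ({i, j} : Finset (Fin h)) ∈ s := by
  have step : ∀ (a b : Fin h) (e : Finset (Fin h)), a < b → a ∉ e → b ∈ e → e ∈ s →
      e.image (Equiv.swap a b) ∈ s := by
    intro a b e hab ha hb he
    have h1 : compress {a} {b} e ∈ 𝓒 {a} {b} s := compress_mem_compression he
    rwa [hs a b hab, compress_single hab.ne ha hb] at h1
  have step2 : ∀ a b c : Fin h, a < b → a ≠ c → b ≠ c → ({b, c} : Finset (Fin h)) ∈ s →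
      ({a, c} : Finset (Fin h)) ∈ s := by
    intro a b c hab hac hbc he
    have := step a b {b, c} hab (by simp [hac, hab.ne]) (by simp) he
    rwa [Finset.image_insert, Finset.image_singleton, Equiv.swap_apply_right,
      Equiv.swap_apply_of_ne_of_ne hac.symm hbc.symm] at this
  have h1 : ({i, y} : Finset (Fin h)) ∈ s := by
    rcases hix.eq_or_lt with rfl | hlt
    · exact hm
    · exact step2 i x y hlt (hlt.trans hxy).ne hxy.ne hm
  rcases hjy.eq_or_lt with rfl | hlt
  · exact h1
  · rw [Finset.pair_comm] at h1 ⊢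
    exact step2 j y i hlt hij.ne' (hij.trans hlt).ne.symm h1

/-- The pairs dominating `{i, 2ℓ - 1 - i}`, where `i + j + 1 = ℓ`. -/
lemma card_dominating {l d i j : ℕ} (hij : i + j + 1 = l) :
    (d + 1 + i) * (l + d + 1 + 3 * j) ≤ 2 * (((Finset.univ : Finset (Fin (2 * l + d) ×
      Fin (2 * l + d))).filter (fun q => i ≤ q.1.val ∧ q.1 < q.2 ∧ l + j ≤ q.2.val)).image
        (fun q => ({q.1, q.2} : Finset (Fin (2 * l + d))))).card := by
  rw [Finset.card_image_of_injOn]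
  · have h1 : ((Finset.range (d + 1 + i)).sigma (fun k => Finset.range (2 * j + 1 + k))).card ≤
        ((Finset.univ : Finset (Fin (2 * l + d) × Fin (2 * l + d))).filter
          (fun q => i ≤ q.1.val ∧ q.1 < q.2 ∧ l + j ≤ q.2.val)).card := by
      refine Finset.card_le_card_of_surjOn
        (fun q => (⟨q.2.val - (l + j), q.1.val - i⟩ : Σ _ : ℕ, ℕ)) ?_
      rintro ⟨k, r⟩ hkr
      simp only [Finset.coe_sigma, Set.mem_sigma_iff, Finset.coe_range, Set.mem_Iio] at hkr
      refine ⟨(⟨i + r, by omega⟩, ⟨l + j + k, by omega⟩), ?_, ?_⟩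
      · simp only [Finset.coe_filter, Finset.mem_univ, true_and, Set.mem_ofPred_eq, Fin.mk_lt_mk]
        omega
      · simp
    refine le_trans ?_ (Nat.mul_le_mul_left 2 h1)
    rw [Finset.card_sigma]
    simp only [Finset.card_range]
    rw [Finset.sum_add_distrib, Finset.sum_const, Finset.card_range, smul_eq_mul]
    have h3 := Finset.sum_range_id_mul_two (d + 1 + i)
    have : d + 1 + i - 1 = d + i := by omega
    rw [this] at h3
    subst hij
    apply le_of_eq
    linear_combination -h3
  · rintro ⟨a, b⟩ h1 ⟨a', b'⟩ h2 h
    simp only [Finset.coe_filter, Finset.mem_univ, true_and, Set.mem_ofPred_eq] at h1 h2 h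
    have ha : a ∈ ({a', b'} : Finset _) := by rw [← h]; simp
    have hb : b ∈ ({a', b'} : Finset _) := by rw [← h]; simp
    simp only [Finset.mem_insert, Finset.mem_singleton] at ha hb
    have := h1.2.1; have := h2.2.1
    simp only [Prod.mk.injEq]
    rcases ha with rfl | rfl <;> rcases hb with rfl | rfl
    · exact absurd h1.2.1 (lt_irrefl _)
    · exact ⟨rfl, rfl⟩
    · exact absurd h1.2.1 (not_lt.2 h2.2.1.le)
    · exact absurd h1.2.1 (lt_irrefl _)

/-- The theorem `rainbow` for the vertex set `Fin (2ℓ + d)`. Once all families are shifted, they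
all contain the disjoint pairs `{i, 2ℓ - 1 - i}`, `i < ℓ`. -/
lemma rainbow_fin {l d X : ℕ}
    (hX : ∀ i j, i + j + 1 = l → 2 * X ≤ (d + 1 + i) * (l + d + 1 + 3 * j))
    (G : Fin l → Finset (Finset (Fin (2 * l + d))))
    (h2 : ∀ i, ∀ e ∈ G i, e.card = 2) (hG : ∀ i, (2 * l + d).choose 2 < (G i).card + X) :
    ∃ f, IsRainbow G f := by
  induction hw : ∑ i, weight (G i) using Nat.strong_induction_on generalizing G with
  | _ w ih =>
  subst hw
  by_cases hs : ∀ a b : Fin (2 * l + d), a < b → ∀ i, 𝓒 {a} {b} (G i) = G i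
  · have hmem : ∀ i : Fin l, ∀ k, ({⟨i.val, by omega⟩, ⟨2 * l - 1 - i.val, by omega⟩} :
        Finset (Fin (2 * l + d))) ∈ G k := by
      intro i k
      by_contra hno
      obtain ⟨j, hj⟩ : ∃ j, i.val + j + 1 = l := ⟨l - 1 - i.val, by omega⟩
      have h3 := card_dominating (d := d) hj
      have h4 := hX _ _ hj
      have h5 := hG k
      set B := (((Finset.univ : Finset (Fin (2 * l + d) ×
        Fin (2 * l + d))).filter (fun q => i.val ≤ q.1.val ∧ q.1 < q.2 ∧ l + j ≤ q.2.val)).image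
          (fun q => ({q.1, q.2} : Finset (Fin (2 * l + d))))) with hB
      have hdis : Disjoint (G k) B := by
        rw [Finset.disjoint_left]
        intro e he heB
        rw [hB, Finset.mem_image] at heB
        obtain ⟨⟨x, y⟩, hxy, rfl⟩ := heB
        simp only [Finset.mem_filter, Finset.mem_univ, true_and] at hxy
        refine hno (shifted_mem (fun a b hab => hs a b hab k) ?_ ?_ hxy.2.1 ?_ he)
        · rw [Fin.mk_lt_mk]; omega
        · exact hxy.1
        · rw [Fin.le_def]; simp only; omega
      have hsub : G k ∪ B ⊆ Finset.powersetCard 2 Finset.univ := by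
        intro e he
        rw [Finset.mem_powersetCard]
        refine ⟨Finset.subset_univ _, ?_⟩
        rcases Finset.mem_union.1 he with he | he
        · exact h2 k e he
        · rw [hB, Finset.mem_image] at he
          obtain ⟨⟨x, y⟩, hxy, rfl⟩ := he
          simp only [Finset.mem_filter, Finset.mem_univ, true_and] at hxy
          exact Finset.card_pair hxy.2.1.ne
      have h6 := Finset.card_le_card hsub
      rw [Finset.card_union_of_disjoint hdis, Finset.card_powersetCard, Finset.card_univ,
        Fintype.card_fin] at h6
      omega
    refine ⟨fun i => {⟨i.val, by omega⟩, ⟨2 * l - 1 - i.val, by omega⟩}, fun i => hmem i i, ?_⟩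
    intro i j hij
    have : i.val ≠ j.val := fun h => hij (Fin.ext h)
    rw [Finset.disjoint_left]
    intro x hx hx'
    simp only [Finset.mem_insert, Finset.mem_singleton, Fin.ext_iff] at hx hx'
    omega
  · push Not at hs
    obtain ⟨a, b, hab, i, hi⟩ := hs
    obtain ⟨f, hf⟩ := ih (∑ i, weight (𝓒 {a} {b} (G i))) (by
      refine Finset.sum_lt_sum (fun k _ => ?_) ⟨i, Finset.mem_univ _, weight_compression_lt hab hi⟩
      by_cases hk : 𝓒 {a} {b} (G k) = G k
      · rw [hk]
      · exact (weight_compression_lt hab hk).le) (fun i => 𝓒 {a} {b} (G i))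
      (fun k => by
        have h := Set.Sized.uvCompression (𝒜 := G k) (r := 2) (u := {a}) (v := {b}) (by simp)
          (fun e he => h2 k e he)
        exact fun e he => h he)
      (fun k => by rw [card_compression]; exact hG k) rfl
    exact hf.of_compression hab.ne

/-- Graphs on `2ℓ + d` vertices, one for each of `ℓ` colours, each missing fewer than `X` pairs,
have a rainbow matching, where `X` is at most the lower bound from `card_dominating` for the number
of pairs dominating `{i, 2ℓ - 1 - i}`, for each `i < ℓ`. -/
theorem rainbow {ι W : Type*} [Fintype ι] [Fintype W] [DecidableEq W] {l d X : ℕ}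
    (hι : Fintype.card ι = l) (hW : Fintype.card W = 2 * l + d)
    (hX : ∀ i j, i + j + 1 = l → 2 * X ≤ (d + 1 + i) * (l + d + 1 + 3 * j))
    (G : ι → Finset (Finset W)) (h2 : ∀ i, ∀ e ∈ G i, e.card = 2)
    (hG : ∀ i, (2 * l + d).choose 2 < (G i).card + X) :
    ∃ f, IsRainbow G f := by
  let eι := (Fintype.equivFinOfCardEq hι).symm
  let eW := Fintype.equivFinOfCardEq hW
  have hinj : Function.Injective (Finset.image eW) := Finset.image_injective eW.injective
  obtain ⟨f, hf⟩ := rainbow_fin hX (fun i => (G (eι i)).image (Finset.image eW))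
    (fun i e he => by
      obtain ⟨e', he', rfl⟩ := Finset.mem_image.1 he
      rw [Finset.card_image_of_injective _ eW.injective]
      exact h2 _ _ he')
    (fun i => by rw [Finset.card_image_of_injective _ hinj]; exact hG _)
  have hf1 := fun i => Finset.mem_image.1 (hf.1 i)
  choose g hg hgf using hf1
  refine ⟨fun i => g (eι.symm i), fun i => by simpa using hg (eι.symm i), fun i j hij => ?_⟩
  have := hf.2 (eι.symm i) (eι.symm j) (by simpa using hij)
  rw [← hgf, ← hgf, Finset.disjoint_image eW.injective] at this
  exact this

end Rainbow
end OreMatching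

/-! ### The exchange argument when the low vertices number `m + 1` -/

namespace OreMatching

set_option linter.unusedSectionVars false
section Swap
variable {V : Type*} [Fintype V] [DecidableEq V] {A : Type*} [Fintype A] [DecidableEq A]
variable {E : Finset (Finset V)}

/-- A matching in `E` covering the set `L`. -/
def Covers (E : Finset (Finset V)) (L : Finset V) : Prop :=
  ∃ M ⊆ E, (∀ e ∈ M, ∀ f ∈ M, e ≠ f → Disjoint e f) ∧ ∀ v ∈ L, ∃ e ∈ M, v ∈ e

lemma covers_of_disjoint {O : Type*} [Fintype O] {L : Finset V} (F : O → Finset V)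
    (hdis : ∀ o o', o ≠ o' → Disjoint (F o) (F o')) (hE : ∀ o, F o ∈ E)
    (hL : ∀ v ∈ L, ∃ o, v ∈ F o) : Covers E L := by
  refine ⟨Finset.univ.image F, ?_, ?_, ?_⟩
  · intro e he
    obtain ⟨o, -, rfl⟩ := Finset.mem_image.1 he
    exact hE o
  · intro e he e' he' hne
    obtain ⟨o, -, rfl⟩ := Finset.mem_image.1 he
    obtain ⟨o', -, rfl⟩ := Finset.mem_image.1 he'
    exact hdis o o' (by rintro rfl; exact hne rfl)
  · intro v hv
    obtain ⟨o, ho⟩ := hL v hv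
    exact ⟨_, Finset.mem_image_of_mem _ (Finset.mem_univ o), ho⟩

/-- A variant of `covers_of_disjoint` for edges given by labels of their vertices, disjointness
being witnessed by an owner function on labels. -/
lemma covers_of_own {T O : Type*} [DecidableEq T] [Fintype O] {L : Finset V} {θ : T → V}
    (hθ : Function.Injective θ) (F : O → Finset T) (own : T → O)
    (hown : ∀ o, ∀ t ∈ F o, own t = o) (hE : ∀ o, (F o).image θ ∈ E)
    (hL : ∀ v ∈ L, ∃ o, ∃ t ∈ F o, θ t = v) : Covers E L := by
  refine covers_of_disjoint (fun o => (F o).image θ) (fun o o' hoo => ?_) hE fun v hv => ?_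
  · rw [Finset.disjoint_image hθ, Finset.disjoint_left]
    intro t ht ht'
    exact hoo ((hown o t ht).symm.trans (hown o' t ht'))
  · obtain ⟨o, t, ht, rfl⟩ := hL v hv
    exact ⟨o, Finset.mem_image_of_mem _ ht⟩

/-- Labels when `|L| = m + 1`: the elements of `L` are labelled by `Option A`, the other vertices by
`A × Fin 2` (covered by a matching covering all of `L` but `none`) and `Fin 2` (uncovered). -/
abbrev Lab (A : Type*) := Option A ⊕ ((A × Fin 2) ⊕ Fin 2)

/-- The label of the element `o` of `L`. -/
abbrev Lab.l (o : Option A) : Lab A := Sum.inl o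
/-- The label of the `k`-th covered vertex in the edge of `a`. -/
abbrev Lab.g (a : A) (k : Fin 2) : Lab A := Sum.inr (Sum.inl (a, k))
/-- The label of an uncovered vertex outside `L`. -/
abbrev Lab.r (j : Fin 2) : Lab A := Sum.inr (Sum.inr j)

variable {θ : Lab A → V}

open Lab in
/-- The exchange step: four matching edges, the uncovered element of `L` and the two uncovered
vertices outside `L` are regrouped into five disjoint edges. -/
lemma covers_of_switch (hθ : Function.Injective θ) {L : Finset V}
    (hL : ∀ v ∈ L, ∃ o, θ (l o) = v)
    (hedge : ∀ a, tri E (θ (l (some a))) (θ (g a 0)) (θ (g a 1)) = 1)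
    {a b c d : A} (hab : a ≠ b) (hac : a ≠ c) (had : a ≠ d) (hbc : b ≠ c) (hbd : b ≠ d)
    (hcd : c ≠ d) {k k' : Fin 2}
    (h1 : tri E (θ (r 0)) (θ (l (some a))) (θ (g b k)) = 1)
    (h2 : tri E (θ (r 1)) (θ (l (some c))) (θ (g d k')) = 1)
    (h3 : tri E (θ (l none)) (θ (g a 0)) (θ (g c 0)) = 1)
    (h4 : ∀ i, tri E (θ (l (some b))) (θ (g c 1)) (θ (g d i)) = 1)
    (h5 : ∀ i, tri E (θ (l (some d))) (θ (g a 1)) (θ (g b i)) = 1) : Covers E L := by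
  simp only [tri_eq_one] at *
  have hk : ∀ k : Fin 2, k + 1 ≠ k := by decide
  let F : Option A → Finset (Lab A) := fun o => match o with
    | none => {l none, g a 0, g c 0}
    | some e => if e = a then {r 0, l (some a), g b k} else
        if e = b then {l (some b), g c 1, g d (k' + 1)} else
        if e = c then {r 1, l (some c), g d k'} else
        if e = d then {l (some d), g a 1, g b (k + 1)} else {l (some e), g e 0, g e 1}
  let own : Lab A → Option A := fun t => match t with
    | Sum.inl o => o
    | Sum.inr (Sum.inr j) => if j = 0 then some a else some c
    | Sum.inr (Sum.inl (e, i)) =>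
        if e = a then (if i = 0 then none else some d) else
        if e = b then (if i = k then some a else some d) else
        if e = c then (if i = 0 then none else some b) else
        if e = d then (if i = k' then some c else some b) else some e
  refine covers_of_own hθ F own ?_ ?_ ?_
  · rintro (_ | e) t ht
    · simp only [F, Finset.mem_insert, Finset.mem_singleton] at ht
      rcases ht with rfl | rfl | rfl <;> simp [own, hac.symm, hbc.symm]
    · simp only [F] at ht
      split_ifs at ht with ha hb hc hd <;>
        simp only [Finset.mem_insert, Finset.mem_singleton] at ht <;>
        rcases ht with rfl | rfl | rfl <;>
        simp [own, *, hab.symm, hac.symm, had.symm, hbc.symm, hbd.symm, hcd.symm]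
  · rintro (_ | e)
    · simpa [F, Finset.image_insert] using h3
    · simp only [F]
      split_ifs with ha hb hc hd <;> simp only [Finset.image_insert, Finset.image_singleton]
      · exact h1
      · exact h4 _
      · exact h2
      · exact h5 _
      · exact hedge e
  · intro v hv
    obtain ⟨o, rfl⟩ := hL v hv
    refine ⟨o, l o, ?_, rfl⟩
    rcases o with _ | e
    · simp [F]
    · simp only [F]
      split_ifs with ha hb hc hd <;> simp [*]

/-- The indicator of a pair `x ≠ y` missing from the link of `v`. -/
def miss (E : Finset (Finset V)) (v x y : V) : ℕ :=
  if x ≠ y ∧ ({v, x, y} : Finset V) ∉ E then 1 else 0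

lemma tri_add_miss (hE : ∀ e ∈ E, e.card = 3) (v x y : V) :
    tri E v x y + miss E v x y + (if x = y then 1 else 0) = 1 := by
  by_cases hxy : x = y
  · subst hxy; simp [miss, tri_self' hE]
  · by_cases h : ({v, x, y} : Finset V) ∈ E <;> simp [miss, tri, hxy, h]

open Lab in
lemma sum_lab (hθ : Function.Bijective θ) (F : V → ℕ) :
    ∑ v, F v = ∑ o, F (θ (l o)) + ∑ z, F (θ (Sum.inr z)) := by
  rw [← hθ.sum_comp, Fintype.sum_sum_type]

open Lab in
/-- The link of a vertex of `L` misses only linearly many pairs outside `L`. -/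
lemma sum_miss (hθ : Function.Bijective θ) (hE : ∀ e ∈ E, e.card = 3)
    (hna : ∀ o o' v, tri E (θ (l o)) (θ (l o')) v = 0) (o : Option A)
    (hd : 2 * Fintype.card A ^ 2 ≤ deg E (θ (l o))) :
    ∑ z, ∑ z', miss E (θ (l o)) (θ (Sum.inr z)) (θ (Sum.inr z')) ≤ 6 * Fintype.card A + 2 := by
  have h1 := two_deg hE (θ (l o))
  rw [sum_lab hθ] at h1
  simp only [hna, Finset.sum_const_zero, zero_add] at h1
  simp only [sum_lab hθ, tri_swap' _ _ (θ (l _)), hna, Finset.sum_const_zero, zero_add] at h1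
  have h2 : ∑ z : (A × Fin 2) ⊕ Fin 2, ∑ z' : (A × Fin 2) ⊕ Fin 2,
      (tri E (θ (l o)) (θ (Sum.inr z)) (θ (Sum.inr z')) +
       miss E (θ (l o)) (θ (Sum.inr z)) (θ (Sum.inr z')) +
        (if θ (Sum.inr z) = θ (Sum.inr z') then 1 else 0)) =
      ∑ z : (A × Fin 2) ⊕ Fin 2, ∑ z' : (A × Fin 2) ⊕ Fin 2, 1 := by
    simp only [tri_add_miss hE]
  simp only [Finset.sum_add_distrib, ← h1, hθ.1.eq_iff, Sum.inr.injEq, Finset.sum_ite_eq,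
    Finset.mem_univ, if_true, Finset.sum_const, Finset.card_univ, Fintype.card_sum,
    Fintype.card_prod, Fintype.card_fin, smul_eq_mul, mul_one] at h2
  nlinarith

open Lab in
/-- An uncovered vertex outside `L` has many edges containing a vertex of `L`, since its edges
outside `L` number at most `(2m + 1).choose 2`. -/
lemma sum_mixed (hθ : Function.Bijective θ) (hE : ∀ e ∈ E, e.card = 3)
    (hna : ∀ o o' v, tri E (θ (l o)) (θ (l o')) v = 0) (j : Fin 2)
    (hd : 3 * Fintype.card A ^ 2 + 2 * Fintype.card A + 1 ≤ deg E (θ (r j))) :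
    Fintype.card A ^ 2 + Fintype.card A + 1 ≤
      ∑ o, ∑ z, tri E (θ (r j)) (θ (l o)) (θ (Sum.inr z)) := by
  have h1 := two_deg hE (θ (r j))
  have h0 : ∀ o o', tri E (θ (r j)) (θ (l o)) (θ (l o')) = 0 := fun o o' => by
    rw [tri_swap, tri_swap', hna]
  simp only [sum_lab hθ, h0, Finset.sum_const_zero, zero_add, Finset.sum_add_distrib] at h1
  have h2 : ∑ z, ∑ o, tri E (θ (r j)) (θ (Sum.inr z)) (θ (l o)) =
      ∑ o, ∑ z, tri E (θ (r j)) (θ (l o)) (θ (Sum.inr z)) := by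
    rw [Finset.sum_comm]
    exact Finset.sum_congr rfl fun o _ => Finset.sum_congr rfl fun z _ => tri_swap' _ _ _
  rw [h2] at h1
  -- pairs outside `L` completing the uncovered vertex to an edge consist of two further vertices
  have h3 : ∑ z : (A × Fin 2) ⊕ Fin 2, ∑ z' : (A × Fin 2) ⊕ Fin 2,
      (tri E (θ (r j)) (θ (Sum.inr z)) (θ (Sum.inr z')) + (if z = z' then 1 else 0) +
        (if z = Sum.inr j then 1 else 0) + (if z' = Sum.inr j then 1 else 0)) ≤
      ∑ z : (A × Fin 2) ⊕ Fin 2, ∑ z' : (A × Fin 2) ⊕ Fin 2,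
        (1 + if z = Sum.inr j then (if z' = Sum.inr j then 2 else 0) else 0) := by
    refine Finset.sum_le_sum fun z _ => Finset.sum_le_sum fun z' _ => ?_
    have := tri_le (E := E) (θ (r j)) (θ (Sum.inr z)) (θ (Sum.inr z'))
    by_cases hz : z = Sum.inr j
    · subst hz
      rw [tri_self hE]
      by_cases hz' : z' = Sum.inr j
      · simp [hz']
      · simp [hz', Ne.symm hz']
    · by_cases hz' : z' = Sum.inr j
      · subst hz'
        rw [tri_self'' hE]
        simp [hz]
      · by_cases hzz : z = z'
        · subst hzz
          rw [tri_self' hE]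
          simp [hz]
        · simpa [hz, hz', hzz] using this
  simp only [Finset.sum_add_distrib, Finset.sum_ite_eq, Finset.sum_ite_eq', Finset.sum_ite_irrel,
    Finset.sum_const_zero,
    Finset.mem_univ, if_true, Finset.sum_const, Finset.card_univ, Fintype.card_sum,
    Fintype.card_prod, Fintype.card_fin, smul_eq_mul, mul_one] at h3
  nlinarith

/-- Summing a nonnegative function over pairs of injectively chosen indices. -/
lemma sum_sum_le {A Z : Type*} [Fintype A] [Fintype Z] {u v : A → Z}
    (hu : Function.Injective u) (hv : Function.Injective v) (F : Z → Z → ℕ) :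
    ∑ a, ∑ b, F (u a) (v b) ≤ ∑ z, ∑ z', F z z' := by
  have h : ∀ {w : A → Z}, Function.Injective w → ∀ f : Z → ℕ, ∑ a, f (w a) ≤ ∑ z, f z := by
    intro w hw f
    have := Finset.sum_map Finset.univ ⟨w, hw⟩ f
    simp only [Function.Embedding.coeFn_mk] at this
    rw [← this]
    exact Finset.sum_le_sum_of_subset (Finset.subset_univ _)
  exact (h hu fun z => ∑ b, F z (v b)).trans (Finset.sum_le_sum fun z _ => h hv _)

open Lab in
/-- At least about half of the ordered pairs `(a, b)` have the uncovered vertex `r j`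
forming an edge with the element of `L` labelled `a` and a vertex in the edge of `b`. -/
lemma exists_p (j : Fin 2)
    (hm : Fintype.card A ^ 2 + Fintype.card A + 1 ≤
      ∑ o, ∑ z, tri E (θ (r j)) (θ (l o)) (θ (Sum.inr z))) :
    ∃ P : A → A → ℕ, Fintype.card A ^ 2 ≤ 2 * ∑ a, ∑ b, P a b + 5 * Fintype.card A + 1 ∧
      ∀ a b, P a b ≤ 1 ∧ (P a b = 1 → a ≠ b ∧
        ∃ k, tri E (θ (r j)) (θ (l (some a))) (θ (g b k)) = 1) := by
  classical
  let P : A → A → ℕ := fun a b => if a ≠ b ∧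
        ∃ k, tri E (θ (r j)) (θ (l (some a))) (θ (g b k)) = 1 then 1 else 0
  refine ⟨P, ?_, fun a b => ⟨by simp only [P]; split_ifs <;> omega, fun h => ?_⟩⟩
  · rw [Fintype.sum_option] at hm
    simp only [Fintype.sum_sum_type, Fintype.sum_prod_type] at hm
    have h1 : ∀ o, ∑ j', tri E (θ (r j)) (θ (l o)) (θ (r j')) ≤ 2 := by
      intro o
      refine (Finset.sum_le_sum fun _ _ => tri_le _ _ _).trans ?_
      simp
    have h2 : ∀ o, ∑ b, ∑ k, tri E (θ (r j)) (θ (l o)) (θ (g b k)) ≤ 2 * Fintype.card A := by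
      intro o
      refine (Finset.sum_le_sum fun _ _ => Finset.sum_le_sum fun _ _ => tri_le _ _ _).trans ?_
      simp [mul_comm]
    have h3 : ∑ a, (∑ b, ∑ k, tri E (θ (r j)) (θ (l (some a))) (θ (g b k)) +
        ∑ j', tri E (θ (r j)) (θ (l (some a))) (θ (r j'))) ≤
        ∑ a, (∑ b, (2 * P a b + if a = b then 2 else 0) + 2) := by
      refine Finset.sum_le_sum fun a _ => add_le_add (Finset.sum_le_sum fun b _ => ?_) (h1 _)
      have h4 := tri_le (E := E) (θ (r j)) (θ (l (some a))) (θ (g b 0))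
      have h5 := tri_le (E := E) (θ (r j)) (θ (l (some a))) (θ (g b 1))
      rw [Fin.sum_univ_two]
      by_cases hab : a = b
      · simp only [hab, if_true]
        subst hab
        omega
      · by_cases hk : ∃ k, tri E (θ (r j)) (θ (l (some a))) (θ (g b k)) = 1
        · simp only [P, hab, ne_eq, not_false_eq_true, true_and, hk, if_true]
          omega
        · simp only [not_exists] at hk
          have := hk 0
          have := hk 1
          omega
    simp only [Finset.sum_add_distrib, Finset.sum_ite_eq, Finset.mem_univ, if_true,
      Finset.sum_const, Finset.card_univ, smul_eq_mul, ← Finset.mul_sum] at h3 hm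
    have h6 := h1 none
    have h7 := h2 none
    simp only [Lab.g, Lab.r] at *
    omega
  · by_contra hcon
    simp only [P, if_neg hcon] at h
    omega

open Lab in
/-- The case `|L| = m + 1` of the covering statement, given a matching covering all of `L` but one
vertex. -/
lemma covers_of_lab (hθ : Function.Bijective θ) (hE : ∀ e ∈ E, e.card = 3) {L : Finset V}
    (hL : ∀ v ∈ L, ∃ o, θ (l o) = v)
    (hna : ∀ o o' v, tri E (θ (l o)) (θ (l o')) v = 0)
    (hedge : ∀ a, tri E (θ (l (some a))) (θ (g a 0)) (θ (g a 1)) = 1)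
    (hdl : ∀ o, 2 * Fintype.card A ^ 2 ≤ deg E (θ (l o)))
    (hdr : ∀ j, 3 * Fintype.card A ^ 2 + 2 * Fintype.card A + 1 ≤ deg E (θ (r j)))
    (hm : 1000 ≤ Fintype.card A) : Covers E L := by
  by_contra hno
  obtain ⟨P, hP, hP'⟩ := exists_p 0 (sum_mixed hθ hE hna 0 (hdr 0))
  obtain ⟨Q, hQ, hQ'⟩ := exists_p 1 (sum_mixed hθ hE hna 1 (hdr 1))
  have tri_of_miss : ∀ o z z', z ≠ z' → miss E (θ (l o)) (θ (Sum.inr z)) (θ (Sum.inr z')) = 0 →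
      tri E (θ (l o)) (θ (Sum.inr z)) (θ (Sum.inr z')) = 1 := by
    intro o z z' hz h
    have := tri_add_miss hE (θ (l o)) (θ (Sum.inr z)) (θ (Sum.inr z'))
    rw [if_neg (fun h => hz (Sum.inr_injective (hθ.1 h)))] at this
    omega
  set m := Fintype.card A with hmdef
  let δ : A → A → ℕ := fun a b => if a = b then 1 else 0
  -- a quadruple allowing no exchange has a coincidence or a missing edge
  have key : ∀ a b c d, P a b * Q c d ≤ δ a c + δ a d + δ b c + δ b d +
      miss E (θ (l none)) (θ (g a 0)) (θ (g c 0)) +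
      (miss E (θ (l (some b))) (θ (g c 1)) (θ (g d 0)) +
        miss E (θ (l (some b))) (θ (g c 1)) (θ (g d 1))) +
      (miss E (θ (l (some d))) (θ (g a 1)) (θ (g b 0)) +
        miss E (θ (l (some d))) (θ (g a 1)) (θ (g b 1))) := by
    intro a b c d
    by_contra hlt
    push Not at hlt
    have hp := hP' a b
    have hq := hQ' c d
    have hpq : P a b * Q c d ≤ 1 := Nat.mul_le_mul hp.1 hq.1
    have hpq1 : P a b * Q c d = 1 := by omega
    obtain ⟨hab, k, hk⟩ := hp.2 (Nat.eq_one_of_mul_eq_one_right hpq1)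
    obtain ⟨hcd, k', hk'⟩ := hq.2 (Nat.eq_one_of_mul_eq_one_left hpq1)
    have hδ : ∀ x y, δ x y = 0 → x ≠ y := by
      intro x y h hxy
      simp [δ, hxy] at h
    have hac := hδ a c (by omega)
    have had := hδ a d (by omega)
    have hbc := hδ b c (by omega)
    have hbd := hδ b d (by omega)
    refine hno (covers_of_switch hθ.1 hL hedge hab hac had hbc hbd hcd hk hk' ?_ ?_ ?_)
    · exact tri_of_miss _ _ _ (by simp [hac]) (by simp only [Lab.g] at hlt; omega)
    · rw [Fin.forall_fin_two]
      exact ⟨tri_of_miss _ _ _ (by simp) (by simp only [Lab.g] at hlt; omega),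
        tri_of_miss _ _ _ (by simp [hcd]) (by simp only [Lab.g] at hlt; omega)⟩
    · rw [Fin.forall_fin_two]
      exact ⟨tri_of_miss _ _ _ (by simp) (by simp only [Lab.g] at hlt; omega),
        tri_of_miss _ _ _ (by simp [hab]) (by simp only [Lab.g] at hlt; omega)⟩
  have hmiss : ∀ o i k, ∑ a, ∑ b, miss E (θ (l o)) (θ (g a i)) (θ (g b k)) ≤ 6 * m + 2 := by
    intro o i k
    refine le_trans ?_ (sum_miss hθ hE hna o (hdl o))
    exact sum_sum_le (u := fun a : A => (Sum.inl (a, i) : (A × Fin 2) ⊕ Fin 2))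
      (v := fun a : A => (Sum.inl (a, k) : (A × Fin 2) ⊕ Fin 2))
      (fun x y h => by simpa using h) (fun x y h => by simpa using h)
      (fun z z' => miss E (θ (l o)) (θ (Sum.inr z)) (θ (Sum.inr z')))
  have total := Finset.sum_le_sum fun (a : A) (_ : a ∈ Finset.univ) =>
    Finset.sum_le_sum fun (b : A) (_ : b ∈ Finset.univ) =>
    Finset.sum_le_sum fun (c : A) (_ : c ∈ Finset.univ) =>
    Finset.sum_le_sum fun (d : A) (_ : d ∈ Finset.univ) => key a b c d
  simp only [Finset.sum_add_distrib, δ, Finset.sum_ite_eq, Finset.mem_univ, if_true,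
    Finset.sum_const, Finset.card_univ, smul_eq_mul, ← Finset.mul_sum, ← Finset.sum_mul,
    ← hmdef, mul_one] at total
  have hA : ∀ i k, ∑ x, ∑ a, ∑ b, miss E (θ (l (some x))) (θ (g a i)) (θ (g b k)) ≤
      m * (6 * m + 2) := by
    intro i k
    refine (Finset.sum_le_sum fun x _ => hmiss (some x) i k).trans ?_
    simp [← hmdef]
  have hB : ∀ i k, ∑ a, ∑ b, ∑ x, miss E (θ (l (some x))) (θ (g a i)) (θ (g b k)) ≤
      m * (6 * m + 2) := by
    intro i k
    refine le_trans (le_of_eq ?_) (hA i k)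
    symm
    rw [Finset.sum_comm]
    exact Finset.sum_congr rfl fun a _ => Finset.sum_comm
  have h1 := Nat.mul_le_mul_left m (Nat.mul_le_mul_left m (hmiss none 0 0))
  have h2 := Nat.mul_le_mul_left m (hA 1 0)
  have h3 := Nat.mul_le_mul_left m (hA 1 1)
  have h4 := Nat.mul_le_mul_left m (hB 1 0)
  have h5 := Nat.mul_le_mul_left m (hB 1 1)
  have h6 : m * m ≤ 4 * ∑ a, ∑ b, P a b := by nlinarith
  have h7 : m * m ≤ 4 * ∑ a, ∑ b, Q a b := by nlinarith
  have h8 := Nat.mul_le_mul h6 h7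
  have h9 : (m * m) * (m * m) ≤ 16 * (4 * (m * (m * m)) + 5 * (m * (m * (6 * m + 2)))) := by
    linarith
  have h10 : 1000 * (m * (m * m)) ≤ (m * m) * (m * m) := by nlinarith [Nat.zero_le (m * (m * m))]
  have h11 : m * m * 1000 ≤ m * m * m := Nat.mul_le_mul_left _ hm
  have h12 : 0 < m * m := by positivity
  nlinarith

end Swap
end OreMatching

/-! ### Covering the vertices of low degree -/

namespace OreMatching
set_option linter.unusedSectionVars false
section Low
variable {V : Type*} [Fintype V] [DecidableEq V]
variable {E : Finset (Finset V)} {m : ℕ}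

/-- The hypotheses of the theorem for `n = 3 (m + 1)` vertices, the degree-sum bound being written
in natural numbers. -/
structure Ore (E : Finset (Finset V)) (m : ℕ) : Prop where
  hc : Fintype.card V = 3 * (m + 1)
  hE : ∀ e ∈ E, e.card = 3
  iso : ∀ v, ∃ e ∈ E, v ∈ e
  ore : ∀ u v, u ≠ v → (∃ e ∈ E, u ∈ e ∧ v ∈ e) → 6 * m ^ 2 + 4 * m + 1 ≤ deg E u + deg E v

/-- The vertices whose degree is at most half of the degree-sum bound. -/
def low (E : Finset (Finset V)) (m : ℕ) : Finset V :=
  Finset.univ.filter (fun v => deg E v ≤ 3 * m ^ 2 + 2 * m)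

lemma mem_low {v : V} : v ∈ low E m ↔ deg E v ≤ 3 * m ^ 2 + 2 * m := by simp [low]

lemma Ore.nonadj (h : Ore E m) {u v : V} (hu : u ∈ low E m) (hv : v ∈ low E m) {e : Finset V}
    (he : e ∈ E) (hue : u ∈ e) (hve : v ∈ e) : u = v := by
  by_contra hne
  have := h.ore u v hne ⟨e, he, hue, hve⟩
  rw [mem_low] at hu hv
  omega

lemma Ore.exists_neighbour (h : Ore E m) (v : V) :
    ∃ u, u ≠ v ∧ ∃ e ∈ E, v ∈ e ∧ u ∈ e := by
  obtain ⟨e, he, hv⟩ := h.iso v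
  obtain ⟨u, hu, huv⟩ := Finset.exists_mem_ne (by rw [h.hE e he]; norm_num : 1 < e.card) v
  exact ⟨u, huv, e, he, hv, hu⟩

lemma two_choose (n : ℕ) : 2 * (n.choose 2 : ℤ) = n * (n - 1) := by
  induction n with
  | zero => simp
  | succ n ih =>
    rw [Nat.choose_succ_succ' n 1, Nat.choose_one_right]
    push_cast
    linarith

/-- No edge contains two low vertices, so no link contains a pair of them. -/
lemma Ore.deg_high_le (h : Ore E m) {u : V} (hu : u ∉ low E m) :
    deg E u + (low E m).card.choose 2 ≤ (3 * m + 2).choose 2 := by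
  have hinj : Set.InjOn (fun e : Finset V => e.erase u)
      ((E.filter (fun e => u ∈ e) : Finset (Finset V)) : Set (Finset V)) := by
    intro e he f hf hef
    simp only [Finset.coe_filter, Set.mem_ofPred_eq] at he hf hef
    rw [← Finset.insert_erase he.2, hef, Finset.insert_erase hf.2]
  rw [deg, ← Finset.card_image_of_injOn hinj, ← Finset.card_powersetCard,
    ← Finset.card_union_of_disjoint]
  · have : (3 * m + 2).choose 2 = (Finset.powersetCard 2 (Finset.univ.erase u)).card := by
      rw [Finset.card_powersetCard, Finset.card_erase_of_mem (Finset.mem_univ _),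
        Finset.card_univ, h.hc]
      rfl
    rw [this]
    refine Finset.card_le_card fun e he => ?_
    rw [Finset.mem_powersetCard]
    rcases Finset.mem_union.1 he with he | he
    · obtain ⟨f, hf, rfl⟩ := Finset.mem_image.1 he
      rw [Finset.mem_filter] at hf
      refine ⟨Finset.erase_subset_erase _ (Finset.subset_univ _), ?_⟩
      rw [Finset.card_erase_of_mem hf.2, h.hE f hf.1]
    · rw [Finset.mem_powersetCard] at he
      refine ⟨fun x hx => ?_, he.2⟩
      rw [Finset.mem_erase]
      exact ⟨fun hxu => hu (hxu ▸ he.1 hx), Finset.mem_univ _⟩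
  · rw [Finset.disjoint_left]
    intro e he he'
    obtain ⟨f, hf, rfl⟩ := Finset.mem_image.1 he
    rw [Finset.mem_filter] at hf
    rw [Finset.mem_powersetCard] at he'
    obtain ⟨x, hx, y, hy, hxy⟩ := Finset.one_lt_card.1 (by rw [he'.2]; norm_num :
      1 < (f.erase u).card)
    exact hxy (h.nonadj (he'.1 hx) (he'.1 hy) hf.1 (Finset.mem_of_mem_erase hx)
      (Finset.mem_of_mem_erase hy))

/-- The link of `v`, as a graph on the complement of `L`. -/
def link (E : Finset (Finset V)) (L : Finset V) (v : V) : Finset (Finset {x // x ∉ L}) :=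
  Finset.univ.filter (fun e => e.card = 2 ∧
    insert v (e.map (Function.Embedding.subtype _)) ∈ E)

/-- Edges at a low vertex contain no other low vertex. -/
lemma Ore.deg_low_le (h : Ore E m) {v : V} (hv : v ∈ low E m) :
    deg E v ≤ (link E (low E m) v).card := by
  refine Finset.card_le_card_of_surjOn
    (fun e => insert v (e.map (Function.Embedding.subtype _))) ?_
  intro e he
  simp only [Finset.coe_filter, Set.mem_ofPred_eq] at he
  have hmap : ((e.erase v).subtype (fun x => x ∉ low E m)).map (Function.Embedding.subtype _) =
      e.erase v := by
    rw [Finset.subtype_map, Finset.filter_eq_self]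
    intro x hx hxl
    rw [Finset.mem_erase] at hx
    exact hx.1 (h.nonadj hxl hv he.1 hx.2 he.2)
  refine ⟨(e.erase v).subtype (fun x => x ∉ low E m), ?_, ?_⟩
  · simp only [link, Finset.coe_filter, Finset.mem_univ, true_and, Set.mem_ofPred_eq]
    rw [hmap, Finset.insert_erase he.2]
    refine ⟨?_, he.1⟩
    rw [← Finset.card_map (Function.Embedding.subtype _), hmap, Finset.card_erase_of_mem he.2,
      h.hE e he.1]
  · simp only [hmap]
    exact Finset.insert_erase he.2

lemma Ore.card_high (h : Ore E m) :
    Fintype.card {x // x ∉ low E m} + (low E m).card = 3 * m + 3 := by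
  have := Fintype.card_subtype_compl (fun x => x ∈ low E m)
  rw [Fintype.card_coe, h.hc] at this
  have h2 := Finset.card_le_univ (low E m)
  rw [h.hc] at h2
  omega

/-- A low vertex has a neighbour, whose degree is at most `(3m + 2).choose 2 - |L|.choose 2`; the
degree-sum condition then bounds the degree of the low vertex from below, which is impossible for
large `L`, as its link lives outside `L`. -/
lemma Ore.low_bounds (h : Ore E m) {v : V} (hv : v ∈ low E m) :
    (low E m).card ≤ m + 1 ∧
    6 * m ^ 2 + 4 * m + 1 + (low E m).card.choose 2 ≤ deg E v + (3 * m + 2).choose 2 := by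
  obtain ⟨u, huv, e, he, hve, hue⟩ := h.exists_neighbour v
  have hu : u ∉ low E m := fun hu => huv (h.nonadj hu hv he hue hve)
  have h1 := h.ore v u huv.symm ⟨e, he, hve, hue⟩
  have h2 := h.deg_high_le hu
  refine ⟨?_, by omega⟩
  have h3 := h.deg_low_le hv
  have h4 : (link E (low E m) v).card ≤ (Fintype.card {x // x ∉ low E m}).choose 2 := by
    rw [← Finset.card_univ, ← Finset.card_powersetCard]
    refine Finset.card_le_card fun f hf => ?_
    rw [link, Finset.mem_filter] at hf
    exact Finset.mem_powersetCard.2 ⟨Finset.subset_univ _, hf.2.1⟩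
  have h5 := h.card_high
  have h6 := two_choose (low E m).card
  have h7 := two_choose (3 * m + 2)
  have h8 := two_choose (Fintype.card {x // x ∉ low E m})
  generalize (low E m).card = k at *
  generalize Fintype.card {x // x ∉ low E m} = w at *
  by_contra hk
  push Not at hk
  have h9 : (w : ℤ) = 3 * m + 3 - k := by omega
  have h10 : 6 * m ^ 2 + 4 * m + 1 + k.choose 2 ≤ w.choose 2 + (3 * m + 2).choose 2 := by omega
  zify at h10 hk
  push_cast at h7
  rw [h9] at h8
  nlinarith

lemma map_link_mem {L : Finset V} {v : V} {f : Finset {x // x ∉ L}} (hf : f ∈ link E L v) :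
    f.card = 2 ∧ insert v (f.map (Function.Embedding.subtype _)) ∈ E := by
  rw [link, Finset.mem_filter] at hf
  exact hf.2

/-- With at most `m` low vertices, `rainbow` applies to their links directly. -/
lemma Ore.covers_of_card_lt (h : Ore E m) (hm : 1000 ≤ m) (hlt : (low E m).card ≤ m) :
    Covers E (low E m) := by
  obtain ⟨s, hs⟩ : ∃ s, (low E m).card + (s + 1) = m + 1 := ⟨m - (low E m).card, by omega⟩
  have hW := h.card_high
  obtain ⟨f, hf⟩ := rainbow (ι := {x // x ∈ low E m}) (W := {x // x ∉ low E m})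
    (l := (low E m).card) (d := 3 * (s + 1)) (X := (3 * m + 2) * (s + 2))
    (by simp) (by omega)
    (fun i j hij => by
      have hm' : m = s + 1 + i + j := by omega
      rw [← hij, hm']
      by_cases hi : 3 ≤ i
      · zify at hi ⊢
        nlinarith [mul_nonneg (by positivity : (0 : ℤ) ≤ s) (by positivity : (0 : ℤ) ≤ j),
          mul_nonneg (by positivity : (0 : ℤ) ≤ i) (by positivity : (0 : ℤ) ≤ j)]
      · have : i = 0 ∨ i = 1 ∨ i = 2 := by omega
        have h5 : 5 ≤ s + j := by omega
        zify at h5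
        rcases this with rfl | rfl | rfl <;> zify <;>
        nlinarith [mul_nonneg (by positivity : (0 : ℤ) ≤ s) (by positivity : (0 : ℤ) ≤ j)])
    (fun v => link E (low E m) v)
    (fun v e he => (map_link_mem he).1)
    (fun v => by
      have h1 := (h.low_bounds v.2).2
      have h2 := h.deg_low_le v.2
      have h3 := two_choose (2 * (low E m).card + 3 * (s + 1))
      have h4 := two_choose (low E m).card
      have h5 := two_choose (3 * m + 2)
      generalize (link E (low E m) v).card = y at *
      generalize (low E m).card = k at *
      have h6 : 6 * m ^ 2 + 4 * m + 1 + k.choose 2 ≤ y + (3 * m + 2).choose 2 := by omega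
      have h7 : (k : ℤ) = m - s := by omega
      zify at h6 ⊢
      push_cast at h3 h5
      rw [h7] at h3 h4
      nlinarith)
  refine covers_of_disjoint (fun v => insert v.1 ((f v).map (Function.Embedding.subtype _))) ?_
    (fun v => (map_link_mem (hf.1 v)).2) fun v hv => ⟨⟨v, hv⟩, by simp⟩
  intro v w hvw
  have hd := hf.2 v w hvw
  have hne : v.1 ≠ w.1 := fun h => hvw (Subtype.ext h)
  have hno : ∀ (x : {x // x ∈ low E m}) y,
      x.1 ∉ (f y).map (Function.Embedding.subtype (fun x => x ∉ low E m)) := by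
    intro x y hx
    obtain ⟨z, -, hz⟩ := Finset.mem_map.1 hx
    exact z.2 (by have : z.1 = x.1 := hz; rw [this]; exact x.2)
  rw [Finset.disjoint_insert_left, Finset.disjoint_insert_right, Finset.disjoint_map]
  refine ⟨?_, hno _ _, hd⟩
  rw [Finset.mem_insert, not_or]
  exact ⟨hne, hno _ _⟩

/-- With `m + 1` low vertices, `rainbow` covers all but one of them, and `covers_of_lab` does the
rest. -/
lemma Ore.covers_of_card_eq (h : Ore E m) (hm : 1000 ≤ m) (heq : (low E m).card = m + 1) :
    Covers E (low E m) := by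
  obtain ⟨l0, hl0⟩ : (low E m).Nonempty := by rw [← Finset.card_pos]; omega
  have hW := h.card_high
  have hdeg : ∀ v ∈ low E m, 2 * m ^ 2 ≤ deg E v := by
    intro v hv
    have h1 := (h.low_bounds hv).2
    have h4 := two_choose (low E m).card
    have h5 := two_choose (3 * m + 2)
    rw [heq] at h1 h4
    zify at h1 ⊢
    push_cast at h4 h5
    nlinarith
  let A := {x // x ∈ (low E m).erase l0}
  have hA : Fintype.card A = m := by
    simp only [A, Fintype.card_coe]
    rw [Finset.card_erase_of_mem hl0, heq]
    rfl
  have hAl : ∀ a : A, a.1 ∈ low E m := fun a => Finset.mem_of_mem_erase a.2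
  have hAne : ∀ a : A, a.1 ≠ l0 := fun a => Finset.ne_of_mem_erase a.2
  obtain ⟨f, hf⟩ := rainbow (ι := A) (W := {x // x ∉ low E m})
    (l := m) (d := 2) (X := 3 * m + 2) hA (by omega)
    (fun i j hij => by rw [← hij]; nlinarith [Nat.zero_le (i * j)])
    (fun v => link E (low E m) v)
    (fun v e he => (map_link_mem he).1)
    (fun v => by
      have h1 := hdeg v.1 (hAl v)
      have h2 := h.deg_low_le (hAl v)
      have h3 := two_choose (2 * m + 2)
      zify at h1 h2 ⊢
      push_cast at h3
      nlinarith)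
  have hpair : ∀ a, ∃ g : Fin 2 → {x // x ∉ low E m}, Function.Injective g ∧ f a = {g 0, g 1} := by
    intro a
    obtain ⟨x, y, hxy, hfa⟩ := Finset.card_eq_two.1 (map_link_mem (hf.1 a)).1
    refine ⟨![x, y], ?_, by simpa using hfa⟩
    intro i j hij
    fin_cases i <;> fin_cases j <;> simp_all [eq_comm]
  choose g hg hfg using hpair
  have hgf : ∀ a k, g a k ∈ f a := by
    intro a k
    rw [hfg]
    fin_cases k <;> simp
  have hginj : Function.Injective (fun q : A × Fin 2 => g q.1 q.2) := by
    rintro ⟨a, k⟩ ⟨b, k'⟩ hab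
    simp only at hab
    by_cases hne : a = b
    · subst hne
      rw [hg a hab]
    · exact absurd (hab ▸ hgf b k') (Finset.disjoint_left.1 (hf.2 a b hne) (hgf a k))
  obtain ⟨r, hr⟩ : ∃ r : Fin 2 → {x // x ∉ low E m}, Function.Injective r ∧
      ∀ j (q : A × Fin 2), r j ≠ g q.1 q.2 := by
    have hcard : (Finset.univ.image (fun q : A × Fin 2 => g q.1 q.2))ᶜ.card = 2 := by
      rw [Finset.card_compl, Finset.card_image_of_injective _ hginj, Finset.card_univ,
        Fintype.card_prod, hA, Fintype.card_fin]
      omega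
    obtain ⟨x, y, hxy, hxyeq⟩ := Finset.card_eq_two.1 hcard
    have hx : ∀ q : A × Fin 2, x ≠ g q.1 q.2 := by
      intro q hq
      have : x ∈ (Finset.univ.image (fun q : A × Fin 2 => g q.1 q.2))ᶜ := by rw [hxyeq]; simp
      rw [Finset.mem_compl] at this
      exact this (Finset.mem_image.2 ⟨q, Finset.mem_univ _, hq.symm⟩)
    have hy : ∀ q : A × Fin 2, y ≠ g q.1 q.2 := by
      intro q hq
      have : y ∈ (Finset.univ.image (fun q : A × Fin 2 => g q.1 q.2))ᶜ := by rw [hxyeq]; simp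
      rw [Finset.mem_compl] at this
      exact this (Finset.mem_image.2 ⟨q, Finset.mem_univ _, hq.symm⟩)
    refine ⟨![x, y], ?_, ?_⟩
    · intro i j hij
      fin_cases i <;> fin_cases j <;> simp_all [eq_comm]
    · rw [Fin.forall_fin_two]
      exact ⟨hx, hy⟩
  let lo : Option A → V := fun o => match o with
    | none => l0
    | some a => a.1
  let hi : (A × Fin 2) ⊕ Fin 2 → {x // x ∉ low E m} := Sum.elim (fun q => g q.1 q.2) r
  have hlo : ∀ o, lo o ∈ low E m := by
    rintro (_ | a)
    · exact hl0
    · exact hAl a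
  have hloinj : Function.Injective lo := by
    rintro (_ | a) (_ | b) hab
    · rfl
    · exact absurd hab.symm (hAne b)
    · exact absurd hab (hAne a)
    · exact congrArg some (Subtype.ext hab)
  have hhiinj : Function.Injective hi :=
    Function.Injective.sumElim hginj hr.1 fun q j => (hr.2 j q).symm
  let θ : Lab A → V := Sum.elim lo (fun z => (hi z).1)
  have hθinj : Function.Injective θ := by
    refine Function.Injective.sumElim hloinj (Subtype.val_injective.comp hhiinj) ?_
    intro o z hoz
    exact (hi z).2 (hoz ▸ hlo o)
  have hθ : Function.Bijective θ := by
    rw [Fintype.bijective_iff_injective_and_card]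
    refine ⟨hθinj, ?_⟩
    simp only [Fintype.card_sum, Fintype.card_option, Fintype.card_prod, Fintype.card_fin, hA, h.hc]
    ring
  refine covers_of_lab hθ h.hE ?_ ?_ ?_ ?_ ?_ (by omega)
  · intro v hv
    by_cases hvl : v = l0
    · exact ⟨none, hvl.symm⟩
    · exact ⟨some ⟨v, Finset.mem_erase.2 ⟨hvl, hv⟩⟩, rfl⟩
  · intro o o' v
    by_contra hne
    have h1 : tri E (lo o) (lo o') v = 1 := by
      have := tri_le (E := E) (lo o) (lo o') v
      have h0 : tri E (lo o) (lo o') v ≠ 0 := hne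
      omega
    have h2 := h.nonadj (hlo o) (hlo o') (tri_eq_one.1 h1) (by simp) (by simp)
    rw [h2, tri_self h.hE] at h1
    omega
  · intro a
    rw [tri_eq_one]
    have := (map_link_mem (hf.1 a)).2
    rw [hfg, Finset.map_insert, Finset.map_singleton] at this
    exact this
  · intro o
    rw [hA]
    exact hdeg _ (hlo o)
  · intro j
    rw [hA]
    have := (r j).2
    rw [mem_low] at this
    have h2 : θ (Lab.r j) = (r j).1 := rfl
    rw [h2]
    omega

/-- The vertices of low degree can be covered by a matching. -/
theorem Ore.covers (h : Ore E m) (hm : 1000 ≤ m) : Covers E (low E m) := by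
  rcases (low E m).eq_empty_or_nonempty with he | ⟨v, hv⟩
  · exact h.covers_of_card_lt hm (by simp [he])
  · rcases (h.low_bounds hv).1.lt_or_eq with hlt | heq
    · exact h.covers_of_card_lt hm (by omega)
    · exact h.covers_of_card_eq hm heq

end Low
end OreMatching

/-! ### Saturation and conclusion -/

namespace OreMatching
set_option linter.unusedSectionVars false
section Final
variable {V : Type*} [Fintype V] [DecidableEq V]
variable {E : Finset (Finset V)} {m : ℕ}

lemma deg_mono {E E' : Finset (Finset V)} (h : E ⊆ E') (v : V) : deg E v ≤ deg E' v :=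
  Finset.card_le_card (Finset.filter_subset_filter _ h)

/-- Adding a triple of vertices of high degree preserves the hypotheses. -/
lemma Ore.addTriple (h : Ore E m) {T : Finset V} (hT : T.card = 3) (hTl : ∀ v ∈ T, v ∉ low E m) :
    Ore (insert T E) m where
  hc := h.hc
  hE := by
    intro e he
    rcases Finset.mem_insert.1 he with rfl | he
    · exact hT
    · exact h.hE e he
  iso := fun v => by
    obtain ⟨e, he, hv⟩ := h.iso v
    exact ⟨e, Finset.mem_insert_of_mem he, hv⟩
  ore := by
    rintro u v huv ⟨e, he, hu, hv⟩
    have h1 := deg_mono (Finset.subset_insert T E) u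
    have h2 := deg_mono (Finset.subset_insert T E) v
    rcases Finset.mem_insert.1 he with rfl | he
    · have h3 := hTl u hu
      have h4 := hTl v hv
      rw [mem_low] at h3 h4
      omega
    · have := h.ore u v huv ⟨e, he, hu, hv⟩
      omega

lemma card_biUnion_matching (hE : ∀ e ∈ E, e.card = 3) {M : Finset (Finset V)} (hM : M ⊆ E)
    (hd : ∀ e ∈ M, ∀ f ∈ M, e ≠ f → Disjoint e f) : (M.biUnion id).card = M.card * 3 := by
  rw [Finset.card_biUnion (t := id) (fun e he f hf hne => hd e he f hf hne)]
  exact Finset.sum_const_nat fun e he => hE e (hM he)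

/-- Without a perfect matching, some non-edge avoids the vertices of low degree. -/
lemma Ore.exists_triple (h : Ore E m) (hm : 1000 ≤ m) (hpm : ¬ HasPM E) :
    ∃ T : Finset V, T.card = 3 ∧ T ∉ E ∧ ∀ v ∈ T, v ∉ low E m := by
  classical
  let S := E.powerset.filter (fun M => (∀ e ∈ M, ∀ f ∈ M, e ≠ f → Disjoint e f) ∧
    ∀ v ∈ low E m, ∃ e ∈ M, v ∈ e)
  obtain ⟨M0, hM0, hM0'⟩ := h.covers hm
  have hS : S.Nonempty := ⟨M0, Finset.mem_filter.2 ⟨Finset.mem_powerset.2 hM0, hM0'⟩⟩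
  obtain ⟨M, hMS, hmax⟩ := Finset.exists_max_image S Finset.card hS
  simp only [S, Finset.mem_filter, Finset.mem_powerset] at hMS hmax
  obtain ⟨hME, hMd, hMl⟩ := hMS
  have hcard := card_biUnion_matching h.hE hME hMd
  have hcompl : (M.biUnion id)ᶜ.card = 3 * (m + 1) - M.card * 3 := by
    rw [Finset.card_compl, hcard, h.hc]
  have hne : (M.biUnion id)ᶜ.card ≠ 0 := by
    intro h0
    rw [Finset.card_eq_zero] at h0
    refine hpm ⟨M, hME, hMd, fun v => ?_⟩
    have : v ∈ M.biUnion id := by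
      by_contra hv
      have := Finset.mem_compl.2 hv
      rw [h0] at this
      simp at this
    simpa using this
  obtain ⟨T, hTs, hT⟩ := Finset.exists_subset_card_eq (s := (M.biUnion id)ᶜ) (n := 3) (by omega)
  have hTout : ∀ v ∈ T, ∀ e ∈ M, v ∉ e := by
    intro v hv e he hve
    have := Finset.mem_compl.1 (hTs hv)
    exact this (Finset.mem_biUnion.2 ⟨e, he, hve⟩)
  refine ⟨T, hT, fun hTE => ?_, fun v hv hvl => ?_⟩
  · have hTM : T ∉ M := by
      intro hTM
      obtain ⟨v, hv⟩ : T.Nonempty := by rw [← Finset.card_pos]; omega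
      exact hTout v hv T hTM hv
    have := hmax (insert T M) ⟨Finset.insert_subset hTE hME, ?_, ?_⟩
    · rw [Finset.card_insert_of_notMem hTM] at this
      omega
    · have hdT : ∀ e ∈ M, Disjoint T e := fun e he =>
        Finset.disjoint_left.2 fun v hv => hTout v hv e he
      intro e he f hf hef
      rcases Finset.mem_insert.1 he with rfl | he' <;> rcases Finset.mem_insert.1 hf with rfl | hf'
      · exact absurd rfl hef
      · exact hdT f hf'
      · exact (hdT e he').symm
      · exact hMd e he' f hf' hef
    · intro v hv
      obtain ⟨e, he, hve⟩ := hMl v hv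
      exact ⟨e, Finset.mem_insert_of_mem he, hve⟩
  · obtain ⟨e, he, hve⟩ := hMl v hvl
    exact hTout v hv e he hve

/-- If adding a triple of vertices of high degree creates a perfect matching, the remaining edges
of that matching give a labelling to which `Setup.false` applies. -/
lemma Ore.step (h : Ore E m) (hm : 100000 ≤ m) (hpm : ¬ HasPM E) {T : Finset V} (hT : T.card = 3)
    (hTl : ∀ v ∈ T, v ∉ low E m) (hpm' : HasPM (insert T E)) : False := by
  classical
  obtain ⟨M, hME, hMd, hMc⟩ := hpm'
  have hTM : T ∈ M := by
    by_contra hTM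
    refine hpm ⟨M, fun e he => ?_, hMd, hMc⟩
    rcases Finset.mem_insert.1 (hME he) with rfl | h'
    · exact absurd he hTM
    · exact h'
  have hcard := card_biUnion_matching (h.addTriple hT hTl).hE hME hMd
  have huniv : M.biUnion id = Finset.univ := by
    ext v
    simpa using hMc v
  rw [huniv, Finset.card_univ, h.hc] at hcard
  let I := {e // e ∈ M.erase T}
  have hI : Fintype.card I = m := by
    simp only [I, Fintype.card_coe]
    rw [Finset.card_erase_of_mem hTM]
    omega
  have henum : ∀ e : Finset V, e.card = 3 → ∃ g : Fin 3 → V, e = {g 0, g 1, g 2} := by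
    intro e he
    obtain ⟨x, y, z, -, -, -, hxyz⟩ := Finset.card_eq_three.1 he
    exact ⟨![x, y, z], by simpa using hxyz⟩
  have hIE : ∀ i : I, i.1 ∈ E := by
    intro i
    have := i.2
    rw [Finset.mem_erase] at this
    exact (Finset.mem_insert.1 (hME this.2)).resolve_left this.1
  obtain ⟨gT, hgT⟩ := henum T hT
  choose gI hgI using fun i : I => henum i.1 (h.hE _ (hIE i))
  let φ : Option I → Fin 3 → V := fun o => match o with
    | none => gT
    | some i => gI i
  have hs : Setup E φ :=
    { hc := by rw [hI]; exact h.hc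
      hE := h.hE
      hpm := hpm
      ore := by rw [hI]; exact h.ore
      np :=
        { surj := by
            intro v
            obtain ⟨e, he, hve⟩ := hMc v
            have key : ∀ g : Fin 3 → V, e = {g 0, g 1, g 2} → ∃ k, g k = v := by
              intro g hg
              rw [hg] at hve
              simp only [Finset.mem_insert, Finset.mem_singleton] at hve
              rcases hve with h | h | h
              exacts [⟨0, h.symm⟩, ⟨1, h.symm⟩, ⟨2, h.symm⟩]
            by_cases heT : e = T
            · obtain ⟨k, hk⟩ := key gT (heT.trans hgT)
              exact ⟨none, k, hk⟩
            · obtain ⟨k, hk⟩ := key (gI ⟨e, Finset.mem_erase.2 ⟨heT, he⟩⟩) (hgI ⟨e, _⟩)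
              exact ⟨some _, k, hk⟩
          edge := fun i => by
            have := hIE i
            rw [hgI i] at this
            exact this }
      hv := by
        intro i
        rw [hI]
        have : gT i ∈ T := by
          rw [hgT]
          fin_cases i <;> simp
        have := hTl _ this
        rw [mem_low] at this
        have h2 : φ none i = gT i := rfl
        rw [h2]
        omega }
  exact hs.false (by omega)

/-- Induction on the number of non-edges: if there is no perfect matching, a triple of vertices of
high degree is added, and `Ore.step` applies. -/
theorem Ore.hasPM (h : Ore E m) (hm : 100000 ≤ m) : HasPM E := by
  classical
  -- adding edges can only go on until `E` contains every triple
  induction hk : (Finset.univ \ E).card using Nat.strong_induction_on generalizing E with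
  | _ k ih =>
  by_contra hpm
  obtain ⟨T, hT, hTE, hTl⟩ := h.exists_triple (by omega) hpm
  refine h.step hm hpm hT hTl (ih _ ?_ (h.addTriple hT hTl) rfl)
  rw [← hk]
  refine Finset.card_lt_card (Finset.ssubset_iff_of_subset ?_ |>.2 ⟨T, ?_, ?_⟩)
  · exact Finset.sdiff_subset_sdiff le_rfl (Finset.subset_insert _ _)
  · simp [hTE]
  · simp

end Final
end OreMatching

/-- (Zhang–Zhao–Lu) There exists `n₀` such that for all `n ≥ n₀`
divisible by 3: if `E` is a 3-uniform hypergraph on `n` vertices with no isolated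
vertex, and `deg u + deg v > (2/3)n² - (8/3)n + 2` for every pair of adjacent
vertices, then `E` has a perfect matching. -/
theorem stmt_0 :
    ∃ n₀ : ℕ, ∀ n : ℕ, n₀ ≤ n → 3 ∣ n →
    ∀ E : Finset (Finset (Fin n)),
      (∀ e ∈ E, e.card = 3) →
      (∀ v : Fin n, ∃ e ∈ E, v ∈ e) →
      (∀ u v : Fin n, u ≠ v → (∃ e ∈ E, u ∈ e ∧ v ∈ e) →
        (((E.filter (fun e => u ∈ e)).card + (E.filter (fun e => v ∈ e)).card : ℝ)
          > (2 / 3) * (n : ℝ) ^ 2 - (8 / 3) * (n : ℝ) + 2)) →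
      ∃ M ⊆ E, (∀ e ∈ M, ∀ f ∈ M, e ≠ f → Disjoint e f) ∧
        ∀ v : Fin n, ∃ e ∈ M, v ∈ e := by
  refine ⟨300003, fun n hn h3 E hE hiso hore => ?_⟩
  obtain ⟨p, rfl⟩ := h3
  obtain ⟨m, rfl⟩ : ∃ m, p = m + 1 := ⟨p - 1, by omega⟩
  have h : OreMatching.Ore E m :=
    { hc := by simp
      hE := hE
      iso := hiso
      ore := by
        intro u v huv hadj
        have h1 := hore u v huv hadj
        have h2 : ((6 * m ^ 2 + 4 * m : ℕ) : ℝ) <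
            ((OreMatching.deg E u + OreMatching.deg E v : ℕ) : ℝ) := by
          simp only [OreMatching.deg]
          push_cast at h1 ⊢
          linear_combination h1
        have h3 : 6 * m ^ 2 + 4 * m < OreMatching.deg E u + OreMatching.deg E v := by
          exact_mod_cast h2
        omega }
  exact h.hasPM (by omega)
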